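/- Let α ≥ 1, p ∈ (1,∞) and s = 1 − 1/p. There exists a constant C > 0, depending only on α and p, such that every function f that is continuously differentiable on the closed upper half-space ℝ³₊ = {(x,y,z) ∈ ℝ³ : z ≥ 0} satisfies ∫_{ℝ²×ℝ²} |f(u,0) − f(v,0)|^p / ( d(u,v)^{ps} · μ(B(u,d(u,v))) ) dμ(u) dμ(v) ≤ C ∫_{ℝ³₊} |Xf(x,y,z)|^p dx dy dz, where for u,v ∈ ℝ² we write d(u,v) = d((u,0),(v,0)), |Xf|² = (X₁f)² + (X₂f)², and μ(B(u,r)) denotes the μ-measure of {v ∈ ℝ² : (v,0) ∈ B((u,0),r)}. -/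

import Mathlib

open MeasureTheory

/-- The minimum appearing in the quasi-distance `δ`, with the conventions of the paper:
it equals `|ζ| ^ (1/(α+1))` when `x = 0` (and it is `0` when `ζ = 0`). -/
noncomputable def ccMin (α x ζ : ℝ) : ℝ :=
  if x = 0 then |ζ| ^ (1 / (α + 1))
  else min (|ζ| ^ (1 / (α + 1))) (|ζ| ^ ((1 : ℝ) / 2) / |x| ^ ((α - 1) / 2))

/-- A horizontal curve on `[0,T]` for the vector fields `X₁ = ∂ₓ`, `X₂ = ∂_y + |x|^α ∂_z`:
a Lipschitz curve whose components have a.e. derivatives `(h₁, h₂, |x|^α h₂)` with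
`h₁² + h₂² ≤ 1`. -/
def IsHorizontal (α T : ℝ) (γ : ℝ → ℝ × ℝ × ℝ) : Prop :=
  (∃ K, LipschitzOnWith K γ (Set.Icc 0 T)) ∧
  ∃ h₁ h₂ : ℝ → ℝ, Measurable h₁ ∧ Measurable h₂ ∧
    (∀ t, (h₁ t) ^ 2 + (h₂ t) ^ 2 ≤ 1) ∧
    ∀ᵐ t ∂(volume.restrict (Set.Ioo 0 T)),
      HasDerivAt (fun s => (γ s).1) (h₁ t) t ∧
      HasDerivAt (fun s => (γ s).2.1) (h₂ t) t ∧
      HasDerivAt (fun s => (γ s).2.2) (|(γ t).1| ^ α * h₂ t) t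

/-- The Carnot–Carathéodory distance associated with `X₁, X₂`. -/
noncomputable def ccDist (α : ℝ) (p q : ℝ × ℝ × ℝ) : ℝ :=
  sInf {T : ℝ | 0 < T ∧ ∃ γ : ℝ → ℝ × ℝ × ℝ, IsHorizontal α T γ ∧ γ 0 = p ∧ γ T = q}

/-- The Carnot–Carathéodory ball. -/
def ccBall (α : ℝ) (p : ℝ × ℝ × ℝ) (r : ℝ) : Set (ℝ × ℝ × ℝ) :=
  {q | ccDist α p q < r}

/-- The algebraic quasi-distance `δ`. -/
noncomputable def deltaDist (α : ℝ) (p q : ℝ × ℝ × ℝ) : ℝ :=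
  |q.1 - p.1| + |q.2.1 - p.2.1| +
    ccMin α p.1 (p.2.2 - q.2.2 + |p.1| ^ α * (q.2.1 - p.2.1))

/-- The perimeter measure `μ = |x|^α ℒ²` on the plane `z = 0`, identified with `ℝ²`. -/
noncomputable def planeMeasure (α : ℝ) : Measure (ℝ × ℝ) :=
  volume.withDensity (fun u => ENNReal.ofReal (|u.1| ^ α))

/-- The closed upper half-space `ℝ³₊`. -/
def upperHalf : Set (ℝ × ℝ × ℝ) := {q | 0 ≤ q.2.2}

/-- The length `|Xf| = ((X₁ f)² + (X₂ f)²)^{1/2}` of the horizontal gradient of `f`,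
computed with derivatives within the closed half-space. -/
noncomputable def XGradNorm (α : ℝ) (f : ℝ × ℝ × ℝ → ℝ) (q : ℝ × ℝ × ℝ) : ℝ :=
  Real.sqrt ((fderivWithin ℝ f upperHalf q ((1 : ℝ), (0 : ℝ), (0 : ℝ))) ^ 2 +
    (fderivWithin ℝ f upperHalf q ((0 : ℝ), (1 : ℝ), |q.1| ^ α)) ^ 2)

/-!
Write `d` for the Carnot–Carathéodory distance, `δ` for the explicit quasi-distance `quasiDist`,
which is `≲ d` on the plane `z = 0`, and `m = |u.1| + |v.1| + δ(u, v)`. The denominator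
`d ^ (p * s) * μ(B)` is at least a constant times `δ ^ (p + 2) * m ^ (α - 1)`.

The elementary step is a chain: from `(x, y, 0)` follow `X₂` for a time `a`, move along `X₁` to an
abscissa `ξ` with `|x| < |ξ|`, and follow `-X₂` for the time `a * (|x| / |ξ|) ^ α` that brings the
curve back to `z = 0`. It stays in the half-space and ends at `(ξ, y + a * κ, 0)` with
`κ = 1 - (|x| / |ξ|) ^ α`. The legs along `X₂` are controlled in `L ^ p` by Hardy's inequality in
`a`, the leg along `X₁` by Hölder's inequality and the substitution `z = |x| ^ α * a`.

Two points `u ≠ v` of the plane are compared through an intermediate point `w`, averaged over a box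
of area `δ ^ 3 / m` whose points are the ends of chains of duration comparable with `δ` from `u`
and from `v` alike. Exchanging the order of integration turns the Besov seminorm into an integral
over all chains.
-/

open Set
open scoped ENNReal

section Elementary

lemma abs_rpow_sub_rpow_le {α M a b : ℝ} (hα : 1 ≤ α) (ha : a ∈ Icc 0 M) (hb : b ∈ Icc 0 M) :
    |a ^ α - b ^ α| ≤ α * M ^ (α - 1) * |a - b| := by
  refine (convex_Icc 0 M).norm_image_sub_le_of_norm_hasDerivWithin_le
    (fun t _ ↦ (Real.hasDerivAt_rpow_const (.inr hα)).hasDerivWithinAt) (fun t ht ↦ ?_) hb ha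
  rw [Real.norm_eq_abs, abs_mul, abs_of_nonneg (by linarith : 0 ≤ α),
    abs_of_nonneg (Real.rpow_nonneg ht.1 _)]
  gcongr
  exacts [ht.1, ht.2]

lemma one_sub_le_one_sub_rpow {α t : ℝ} (hα : 1 ≤ α) (ht : t ∈ Icc 0 1) :
    1 - t ≤ 1 - t ^ α := by
  gcongr
  simpa using Real.rpow_le_rpow_of_exponent_ge' ht.1 ht.2 zero_le_one hα

end Elementary

section MeasureTools

variable {X Y : Type*} [MeasurableSpace X] [MeasurableSpace Y]

lemma measurable_setLIntegral_fiber {ν : Measure Y} [SFinite ν] {r : Set (X × Y)}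
    (hr : MeasurableSet r) {F : X → Y → ℝ≥0∞} (hF : Measurable fun q : X × Y ↦ F q.1 q.2) :
    Measurable fun x ↦ ∫⁻ y in {y | (x, y) ∈ r}, F x y ∂ν := by
  have hfiber (x : X) : MeasurableSet {y | (x, y) ∈ r} := measurable_prodMk_left hr
  simp_rw [← lintegral_indicator (hfiber _)]
  exact (hF.indicator hr).lintegral_prod_right'

lemma setLIntegral_fiber_swap {μ : Measure X} {ν : Measure Y} [SFinite μ] [SFinite ν]
    {r : Set (X × Y)} (hr : MeasurableSet r) {F : X → Y → ℝ≥0∞}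
    (hF : Measurable fun q : X × Y ↦ F q.1 q.2) :
    ∫⁻ x, ∫⁻ y in {y | (x, y) ∈ r}, F x y ∂ν ∂μ =
      ∫⁻ y, ∫⁻ x in {x | (x, y) ∈ r}, F x y ∂μ ∂ν := by
  have hx (x : X) : MeasurableSet {y | (x, y) ∈ r} := measurable_prodMk_left hr
  have hy (y : Y) : MeasurableSet {x | (x, y) ∈ r} := measurable_prodMk_right hr
  simp_rw [← lintegral_indicator (hx _), ← lintegral_indicator (hy _)]
  exact lintegral_lintegral_swap (hF.indicator hr).aemeasurable

lemma setLIntegral_le_setLIntegral_of_ne_zero {μ : Measure X} {s t : Set X} (hs : MeasurableSet s)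
    (ht : MeasurableSet t) {f g : X → ℝ≥0∞} (hfg : ∀ x ∈ s, f x ≠ 0 → x ∈ t ∧ f x ≤ g x) :
    ∫⁻ x in s, f x ∂μ ≤ ∫⁻ x in t, g x ∂μ := by
  rw [← lintegral_indicator hs, ← lintegral_indicator ht]
  refine lintegral_mono fun x ↦ indicator_apply_le' (fun hx ↦ ?_) fun _ ↦ zero_le
  by_cases hfx : f x = 0
  · simp only [hfx, zero_le]
  · rw [indicator_of_mem (hfg x hx hfx).1]
    exact (hfg x hx hfx).2

lemma lintegral_mul_lintegral_mul_swap {μ : Measure X} {ν : Measure Y} [SFinite μ] [SFinite ν]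
    {v : X → ℝ≥0∞} {w : Y → ℝ≥0∞} {F : X → Y → ℝ≥0∞} (hv : Measurable v) (hw : Measurable w)
    (hF : Measurable fun q : X × Y ↦ F q.1 q.2) :
    ∫⁻ x, v x * ∫⁻ y, w y * F x y ∂ν ∂μ = ∫⁻ y, w y * ∫⁻ x, v x * F x y ∂μ ∂ν := by
  have hx (x : X) : v x * ∫⁻ y, w y * F x y ∂ν = ∫⁻ y, v x * (w y * F x y) ∂ν :=
    (lintegral_const_mul _ (hw.mul (hF.comp measurable_prodMk_left))).symm
  have hy (y : Y) : w y * ∫⁻ x, v x * F x y ∂μ = ∫⁻ x, w y * (v x * F x y) ∂μ :=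
    (lintegral_const_mul _ (hv.mul (hF.comp measurable_prodMk_right))).symm
  simp_rw [hx, hy, mul_left_comm (w _)]
  exact lintegral_lintegral_swap (by fun_prop)

lemma setLIntegral_comp_const_mul {c : ℝ} (hc : c ≠ 0) {s : Set ℝ} (hs : MeasurableSet s)
    {h : ℝ → ℝ≥0∞} (hh : Measurable h) :
    ∫⁻ t in (c * ·) ⁻¹' s, h (c * t) = ENNReal.ofReal |c⁻¹| * ∫⁻ z in s, h z := by
  rw [← setLIntegral_map hs hh (measurable_const_mul c), Real.map_volume_mul_left hc,
    Measure.restrict_smul, lintegral_smul_measure, smul_eq_mul]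

lemma lintegral_eq_mul_lintegral_add_mul {c : ℝ} (hc : 0 < c) (b : ℝ) {h : ℝ → ℝ≥0∞}
    (hh : Measurable h) : ∫⁻ z, h z = ENNReal.ofReal c * ∫⁻ t, h (b + t * c) := by
  have hscale := setLIntegral_comp_const_mul hc.ne' MeasurableSet.univ
    (h := fun z ↦ h (b + z)) (by fun_prop)
  simp only [preimage_univ, Measure.restrict_univ, lintegral_add_left_eq_self] at hscale
  simp_rw [mul_comm _ c]
  rw [hscale, abs_of_pos (inv_pos.2 hc), ← mul_assoc, ← ENNReal.ofReal_mul hc.le,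
    mul_inv_cancel₀ hc.ne', ENNReal.ofReal_one, one_mul]

lemma setLIntegral_Ioi_comp_mul {c : ℝ} (hc : 0 < c) {h : ℝ → ℝ≥0∞} (hh : Measurable h) :
    ∫⁻ t in Ioi 0, h (c * t) = ENNReal.ofReal c⁻¹ * ∫⁻ z in Ioi 0, h z := by
  rw [← abs_of_pos (inv_pos.2 hc), ← setLIntegral_comp_const_mul hc.ne' measurableSet_Ioi hh,
    preimage_const_mul_Ioi₀ 0 hc, zero_div]

lemma setLIntegral_Ioi_inv_mul_comp_mul {c : ℝ} (hc : 0 < c) {h : ℝ → ℝ≥0∞}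
    (hh : Measurable h) :
    ∫⁻ a in Ioi 0, ENNReal.ofReal a⁻¹ * h (c * a) =
      ∫⁻ z in Ioi 0, ENNReal.ofReal z⁻¹ * h z := by
  have hscale := setLIntegral_Ioi_comp_mul hc (h := fun z ↦ ENNReal.ofReal z⁻¹ * h z)
    (by fun_prop)
  calc
    _ = ∫⁻ a in Ioi 0, ENNReal.ofReal c * (ENNReal.ofReal (c * a)⁻¹ * h (c * a)) := by
      refine setLIntegral_congr_fun measurableSet_Ioi fun a _ ↦ ?_
      rw [← mul_assoc, ← ENNReal.ofReal_mul hc.le, mul_inv, mul_inv_cancel_left₀ hc.ne']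
    _ = _ := by
      rw [lintegral_const_mul _ (by fun_prop), hscale, ← mul_assoc, ← ENNReal.ofReal_mul hc.le,
        mul_inv_cancel₀ hc.ne', ENNReal.ofReal_one, one_mul]

lemma setLIntegral_Ioo_eq_mul_comp_mul {a : ℝ} (ha : 0 < a) {h : ℝ → ℝ≥0∞}
    (hh : Measurable h) :
    ∫⁻ s in Ioo 0 a, h s = ENNReal.ofReal a * ∫⁻ t in Ioo 0 1, h (a * t) := by
  have hpre : (a * ·) ⁻¹' Ioo 0 a = Ioo 0 1 := by
    rw [preimage_const_mul_Ioo₀ _ _ ha, zero_div, div_self ha.ne']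
  rw [← hpre, setLIntegral_comp_const_mul ha.ne' measurableSet_Ioo hh, ← mul_assoc,
    ← ENNReal.ofReal_mul ha.le, abs_of_pos (inv_pos.2 ha), mul_inv_cancel₀ ha.ne',
    ENNReal.ofReal_one, one_mul]

lemma setLIntegral_Ioo_rpow {r : ℝ} (hr : -1 < r) :
    ∫⁻ t in Ioo (0 : ℝ) 1, ENNReal.ofReal (t ^ r) = ENNReal.ofReal (1 / (r + 1)) := by
  rw [restrict_Ioo_eq_restrict_Ioc, ← ofReal_integral_eq_lintegral_ofReal,
    ← intervalIntegral.integral_of_le zero_le_one, integral_rpow (.inl hr), Real.one_rpow,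
    Real.zero_rpow (by linarith), sub_zero]
  · rw [← IntegrableOn, ← intervalIntegrable_iff_integrableOn_Ioc_of_le zero_le_one]
    exact intervalIntegral.intervalIntegrable_rpow' hr
  · filter_upwards [ae_restrict_mem measurableSet_Ioc] with t ht using Real.rpow_nonneg ht.1.le _

lemma lintegral_rpow_le_lintegral_weight_mul {p : ℝ} (hp : 1 < p) {μ : Measure X}
    {w h : X → ℝ≥0∞} (hw : Measurable w) (hw₀ : ∀ᵐ x ∂μ, w x ≠ 0) (hw₁ : ∀ᵐ x ∂μ, w x ≠ ∞)
    (hh : Measurable h) :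
    (∫⁻ x, h x ∂μ) ^ p ≤
      (∫⁻ x, w x ^ (-(1 / (p - 1))) ∂μ) ^ (p - 1) * ∫⁻ x, w x * h x ^ p ∂μ := by
  have hp₀ : 0 < p := by linarith
  have hp₁ : 0 < p - 1 := by linarith
  have hpq : (p / (p - 1)).HolderConjugate p :=
    Real.holderConjugate_iff.2 ⟨by rw [one_lt_div hp₁]; linarith, by field_simp; ring⟩
  have hsplit : ∫⁻ x, h x ∂μ = ∫⁻ x, w x ^ (-(1 / p)) * (w x ^ (1 / p) * h x) ∂μ := by
    refine lintegral_congr_ae ?_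
    filter_upwards [hw₀, hw₁] with x h₀ h₁
    rw [← mul_assoc, ← ENNReal.rpow_add _ _ h₀ h₁, neg_add_cancel, ENNReal.rpow_zero, one_mul]
  have holder := ENNReal.lintegral_mul_le_Lp_mul_Lq μ hpq
    (f := fun x ↦ w x ^ (-(1 / p))) (g := fun x ↦ w x ^ (1 / p) * h x) (by fun_prop) (by fun_prop)
  have e₁ (x : X) : (w x ^ (-(1 / p))) ^ (p / (p - 1)) = w x ^ (-(1 / (p - 1))) := by
    rw [← ENNReal.rpow_mul]; congr 1; field_simp
  have e₂ (x : X) : (w x ^ (1 / p) * h x) ^ p = w x * h x ^ p := by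
    rw [ENNReal.mul_rpow_of_nonneg _ _ hp₀.le, ← ENNReal.rpow_mul, one_div_mul_cancel hp₀.ne',
      ENNReal.rpow_one]
  simp only [Pi.mul_apply, e₁, e₂, ← hsplit] at holder
  refine (ENNReal.rpow_le_rpow holder hp₀.le).trans_eq ?_
  rw [ENNReal.mul_rpow_of_nonneg _ _ hp₀.le, ← ENNReal.rpow_mul, ← ENNReal.rpow_mul,
    one_div_mul_cancel hp₀.ne', ENNReal.rpow_one, one_div_div, div_mul_cancel₀ _ hp₀.ne']

lemma setLIntegral_rpow_le_measure_mul {p : ℝ} (hp : 1 < p) {μ : Measure X} (s : Set X)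
    {h : X → ℝ≥0∞} (hh : Measurable h) :
    (∫⁻ x in s, h x ∂μ) ^ p ≤ μ s ^ (p - 1) * ∫⁻ x in s, h x ^ p ∂μ := by
  simpa using lintegral_rpow_le_lintegral_weight_mul hp (μ := μ.restrict s) (w := fun _ ↦ 1)
    measurable_const (by simp) (by simp) hh

/-- The weight `t ^ ((p - 1) / 2)` makes both `t ^ (-1 / 2)` (from Hölder's inequality) and
`t ^ ((p - 3) / 2)` (from the dilation by `t` in Hardy's inequality) integrable. -/
lemma setLIntegral_Ioo_zero_one_rpow_le {p : ℝ} (hp : 1 < p) {h : ℝ → ℝ≥0∞} (hh : Measurable h) :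
    (∫⁻ t in Ioo 0 1, h t) ^ p ≤
      ENNReal.ofReal (2 ^ (p - 1)) *
        ∫⁻ t in Ioo 0 1, ENNReal.ofReal (t ^ ((p - 1) / 2)) * h t ^ p := by
  have hp₁ : 0 < p - 1 := by linarith
  have hweight : ∫⁻ t in Ioo (0 : ℝ) 1, ENNReal.ofReal (t ^ ((p - 1) / 2)) ^ (-(1 / (p - 1))) =
      ENNReal.ofReal 2 := by
    rw [(by norm_num : (2 : ℝ) = 1 / (-(1 / 2) + 1)), ← setLIntegral_Ioo_rpow (by norm_num)]
    refine setLIntegral_congr_fun measurableSet_Ioo fun t ht ↦ ?_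
    rw [ENNReal.ofReal_rpow_of_pos (Real.rpow_pos_of_pos ht.1 _), ← Real.rpow_mul ht.1.le]
    congr 2
    field_simp
    norm_num
  have holder := lintegral_rpow_le_lintegral_weight_mul hp (μ := volume.restrict (Ioo 0 1))
    (w := fun t ↦ ENNReal.ofReal (t ^ ((p - 1) / 2))) (by fun_prop)
    (by filter_upwards [ae_restrict_mem measurableSet_Ioo] with t ht
        simpa using Real.rpow_pos_of_pos ht.1 _)
    (.of_forall fun t ↦ ENNReal.ofReal_ne_top) hh
  rwa [hweight, ENNReal.ofReal_rpow_of_pos two_pos] at holder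

theorem hardy_inequality {p : ℝ} (hp : 1 < p) {h : ℝ → ℝ≥0∞} (hh : Measurable h) :
    ∫⁻ a in Ioi 0, ENNReal.ofReal (a ^ (-p)) * (∫⁻ s in Ioo 0 a, h s) ^ p ≤
      ENNReal.ofReal (2 ^ (p - 1) * (2 / (p - 1))) * ∫⁻ s in Ioi 0, h s ^ p := by
  have hp₀ : 0 < p := by linarith
  set ω : ℝ → ℝ≥0∞ := fun t ↦ ENNReal.ofReal (t ^ ((p - 1) / 2)) with hω
  have hmeas : Measurable fun q : ℝ × ℝ ↦ ω q.2 * h (q.1 * q.2) ^ p := by fun_prop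
  have average_le (a : ℝ) (ha : 0 < a) :
      ENNReal.ofReal (a ^ (-p)) * (∫⁻ s in Ioo 0 a, h s) ^ p ≤
        ENNReal.ofReal (2 ^ (p - 1)) * ∫⁻ t in Ioo 0 1, ω t * h (a * t) ^ p := by
    rw [setLIntegral_Ioo_eq_mul_comp_mul ha hh, ENNReal.mul_rpow_of_nonneg _ _ hp₀.le,
      ENNReal.ofReal_rpow_of_pos ha, ← mul_assoc, ← ENNReal.ofReal_mul (by positivity),
      ← Real.rpow_add ha, neg_add_cancel, Real.rpow_zero, ENNReal.ofReal_one, one_mul]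
    exact setLIntegral_Ioo_zero_one_rpow_le hp (by fun_prop)
  have dilate (t : ℝ) (ht : t ∈ Ioo (0 : ℝ) 1) : ∫⁻ a in Ioi 0, ω t * h (a * t) ^ p =
      ENNReal.ofReal (t ^ ((p - 1) / 2 - 1)) * ∫⁻ s in Ioi 0, h s ^ p := by
    simp_rw [mul_comm _ t]
    rw [lintegral_const_mul _ (by fun_prop), setLIntegral_Ioi_comp_mul ht.1 (hh.pow_const p),
      ← mul_assoc, hω, ← ENNReal.ofReal_mul (Real.rpow_nonneg ht.1.le _),
      Real.rpow_sub_one ht.1.ne', div_eq_mul_inv _ t]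
  calc
    _ ≤ ∫⁻ a in Ioi 0, ENNReal.ofReal (2 ^ (p - 1)) * ∫⁻ t in Ioo 0 1, ω t * h (a * t) ^ p :=
      setLIntegral_mono' measurableSet_Ioi average_le
    _ = ENNReal.ofReal (2 ^ (p - 1)) * ∫⁻ t in Ioo 0 1, ∫⁻ a in Ioi 0, ω t * h (a * t) ^ p := by
      rw [lintegral_const_mul _ hmeas.lintegral_prod_right',
        lintegral_lintegral_swap hmeas.aemeasurable]
    _ = _ := by
      rw [setLIntegral_congr_fun measurableSet_Ioo dilate, lintegral_mul_const _ (by fun_prop),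
        setLIntegral_Ioo_rpow (by linarith), ← mul_assoc, ← ENNReal.ofReal_mul (by positivity)]
      rw [(by ring : (p - 1) / 2 - 1 + 1 = (p - 1) / 2), one_div_div]

lemma add_add_rpow_le_const_mul {p : ℝ} (hp : 1 ≤ p) (a b c : ℝ≥0∞) :
    (a + b + c) ^ p ≤ 3 ^ (p - 1) * (a ^ p + b ^ p + c ^ p) := by
  simpa [Fin.sum_univ_three] using
    ENNReal.rpow_sum_le_const_mul_sum_rpow Finset.univ ![a, b, c] hp

end MeasureTools

section HorizontalCurves

open Filter Topology

lemma abs_sub_le_of_ae_abs_deriv_le {T M : ℝ} {K : NNReal} {g : ℝ → ℝ} (hT : 0 ≤ T)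
    (hg : LipschitzOnWith K g (Icc 0 T))
    (hg' : ∀ᵐ t ∂(volume.restrict (Ioo 0 T)), |deriv g t| ≤ M) :
    |g T - g 0| ≤ M * T := by
  have hac : AbsolutelyContinuousOnInterval g 0 T :=
    LipschitzOnWith.absolutelyContinuousOnInterval (by rwa [uIcc_of_le hT])
  have hderiv : ∀ᵐ t, t ∈ uIoc 0 T → ‖deriv g t‖ ≤ M := by
    rwa [uIoc_of_le hT, ← ae_restrict_iff' measurableSet_Ioc, ← restrict_Ioo_eq_restrict_Ioc]
  have hint := intervalIntegral.norm_integral_le_of_norm_le_const_ae hderiv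
  rwa [hac.integral_deriv_eq_sub, sub_zero, abs_of_nonneg hT, Real.norm_eq_abs] at hint

lemma lipschitzOnWith_Icc_of_Icc_of_Icc {E : Type*} [PseudoMetricSpace E] {f : ℝ → E} {K : NNReal}
    {a b c : ℝ} (hab : LipschitzOnWith K f (Icc a b)) (hbc : LipschitzOnWith K f (Icc b c)) :
    LipschitzOnWith K f (Icc a c) := by
  have dist_le {s t : ℝ} (hs : s ∈ Icc a c) (ht : t ∈ Icc a c) (hst : s ≤ t) :
      dist (f s) (f t) ≤ K * dist s t := by
    rcases le_total t b with htb | hbt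
    · exact hab.dist_le_mul s ⟨hs.1, hst.trans htb⟩ t ⟨ht.1, htb⟩
    rcases le_total b s with hbs | hsb
    · exact hbc.dist_le_mul s ⟨hbs, hs.2⟩ t ⟨hbt, ht.2⟩
    calc dist (f s) (f t) ≤ dist (f s) (f b) + dist (f b) (f t) := dist_triangle _ _ _
      _ ≤ K * dist s b + K * dist b t :=
          add_le_add (hab.dist_le_mul s ⟨hs.1, hsb⟩ b ⟨hs.1.trans hsb, le_rfl⟩)
            (hbc.dist_le_mul b ⟨le_rfl, hbt.trans ht.2⟩ t ⟨hbt, ht.2⟩)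
      _ = K * dist s t := by
          rw [dist_comm s b, dist_comm b t, dist_comm s t, Real.dist_eq, Real.dist_eq, Real.dist_eq,
            abs_of_nonneg (sub_nonneg.2 hsb), abs_of_nonneg (sub_nonneg.2 hbt),
            abs_of_nonneg (sub_nonneg.2 hst)]
          ring
  refine LipschitzOnWith.of_dist_le_mul fun s hs t ht ↦ ?_
  rcases le_total s t with h | h
  · exact dist_le hs ht h
  · rw [dist_comm, dist_comm s t]; exact dist_le ht hs h

variable {α T : ℝ} {γ : ℝ → ℝ × ℝ × ℝ}

namespace IsHorizontal

lemma mono {T' : ℝ} (hγ : IsHorizontal α T γ) (hT : T' ≤ T) : IsHorizontal α T' γ := by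
  obtain ⟨⟨K, hK⟩, h₁, h₂, hm₁, hm₂, hh, hd⟩ := hγ
  exact ⟨⟨K, hK.mono (Icc_subset_Icc_right hT)⟩, h₁, h₂, hm₁, hm₂, hh,
    ae_restrict_of_ae_restrict_of_subset (Ioo_subset_Ioo_right hT) hd⟩

lemma abs_fst_sub_le (hγ : IsHorizontal α T γ) (hT : 0 ≤ T) : |(γ T).1 - (γ 0).1| ≤ T := by
  obtain ⟨⟨K, hK⟩, h₁, h₂, -, -, hh, hd⟩ := hγ
  refine (abs_sub_le_of_ae_abs_deriv_le (M := 1) (g := fun t ↦ (γ t).1) hT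
    (LipschitzWith.prod_fst.comp_lipschitzOnWith hK) ?_).trans_eq (one_mul T)
  filter_upwards [hd] with t ht
  rw [ht.1.deriv, ← sq_le_one_iff_abs_le_one]
  linarith [hh t, sq_nonneg (h₂ t)]

lemma abs_snd_sub_le (hγ : IsHorizontal α T γ) (hT : 0 ≤ T) :
    |(γ T).2.1 - (γ 0).2.1| ≤ T := by
  obtain ⟨⟨K, hK⟩, h₁, h₂, -, -, hh, hd⟩ := hγ
  refine (abs_sub_le_of_ae_abs_deriv_le (M := 1) (g := fun t ↦ (γ t).2.1) hT
    ((LipschitzWith.prod_fst.comp LipschitzWith.prod_snd).comp_lipschitzOnWith hK) ?_).trans_eq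
    (one_mul T)
  filter_upwards [hd] with t ht
  rw [ht.2.1.deriv, ← sq_le_one_iff_abs_le_one]
  linarith [hh t, sq_nonneg (h₁ t)]

/-- The form `|x₀| ^ α dy - dz` is `(|x₀| ^ α - |x| ^ α) h₂ dt` along the curve, and
`|x - x₀| ≤ T`. -/
lemma abs_rpow_mul_sub_sub_le (hγ : IsHorizontal α T γ) (hα : 1 ≤ α) (hT : 0 ≤ T) :
    |(|(γ 0).1| ^ α * (γ T).2.1 - (γ T).2.2) - (|(γ 0).1| ^ α * (γ 0).2.1 - (γ 0).2.2)| ≤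
      α * (|(γ 0).1| + T) ^ (α - 1) * T * T := by
  have hγ' := hγ
  obtain ⟨⟨K, hK⟩, h₁, h₂, -, -, hh, hd⟩ := hγ
  set c := |(γ 0).1| ^ α
  let L : ℝ × ℝ × ℝ →L[ℝ] ℝ :=
    (c • ContinuousLinearMap.fst ℝ ℝ ℝ - ContinuousLinearMap.snd ℝ ℝ ℝ) ∘L
      ContinuousLinearMap.snd ℝ ℝ (ℝ × ℝ)
  refine abs_sub_le_of_ae_abs_deriv_le (g := fun t ↦ c * (γ t).2.1 - (γ t).2.2) hT
    (L.lipschitz.comp_lipschitzOnWith hK) ?_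
  filter_upwards [hd, ae_restrict_mem measurableSet_Ioo] with t ht ht₀T
  have hx : |(γ t).1 - (γ 0).1| ≤ t := (hγ'.mono ht₀T.2.le).abs_fst_sub_le ht₀T.1.le
  have hx' : |(|(γ 0).1| - |(γ t).1|)| ≤ T := by
    rw [abs_sub_comm]
    exact (abs_abs_sub_abs_le_abs_sub _ _).trans (hx.trans ht₀T.2.le)
  have hh₂ : |h₂ t| ≤ 1 := (sq_le_one_iff_abs_le_one _).1 (by linarith [hh t, sq_nonneg (h₁ t)])
  have hxα : |c - |(γ t).1| ^ α| ≤ α * (|(γ 0).1| + T) ^ (α - 1) * T := by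
    refine (abs_rpow_sub_rpow_le (M := |(γ 0).1| + T) hα ⟨abs_nonneg _, by linarith⟩
      ⟨abs_nonneg _, by linarith [(abs_le.1 hx').1]⟩).trans ?_
    gcongr
  have hderiv : HasDerivAt (fun t ↦ c * (γ t).2.1 - (γ t).2.2)
      (c * h₂ t - |(γ t).1| ^ α * h₂ t) t := (ht.2.1.const_mul c).sub ht.2.2
  rw [hderiv.deriv, ← sub_mul, abs_mul]
  exact (mul_le_of_le_one_right (abs_nonneg _) hh₂).trans hxα

/-- If `|x| < T` the bound on `|y' - y|` suffices; otherwise `|x|` is at most `2 |x₀|` along the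
curve. -/
lemma abs_fst_mul_abs_snd_sub_le (hγ : IsHorizontal α T γ) (hα : 1 ≤ α) (hT : 0 ≤ T)
    (h₀ : (γ 0).2.2 = 0) (h₁ : (γ T).2.2 = 0) :
    |(γ 0).1| * |(γ T).2.1 - (γ 0).2.1| ≤ α * 2 ^ (α - 1) * T ^ 2 := by
  have hα₂ : 1 ≤ α * 2 ^ (α - 1) :=
    one_le_mul_of_one_le_of_one_le hα (Real.one_le_rpow one_le_two (by linarith))
  rcases lt_or_ge |(γ 0).1| T with hxT | hTx
  · calc |(γ 0).1| * |(γ T).2.1 - (γ 0).2.1| ≤ T * T := by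
          gcongr; exact hγ.abs_snd_sub_le hT
      _ = 1 * T ^ 2 := by ring
      _ ≤ _ := by gcongr
  rcases (abs_nonneg (γ 0).1).eq_or_lt with hx | hx
  · rw [← hx, zero_mul]; positivity
  refine le_of_mul_le_mul_left ?_ (Real.rpow_pos_of_pos hx (α - 1))
  calc
    _ = |(|(γ 0).1| ^ α * (γ T).2.1 - (γ T).2.2) -
        (|(γ 0).1| ^ α * (γ 0).2.1 - (γ 0).2.2)| := by
      rw [h₀, h₁, sub_zero, sub_zero, ← mul_sub, abs_mul,
        abs_of_nonneg (Real.rpow_nonneg (abs_nonneg _) α), ← mul_assoc, ← Real.rpow_add_one hx.ne',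
        sub_add_cancel]
    _ ≤ α * (|(γ 0).1| + T) ^ (α - 1) * T * T := hγ.abs_rpow_mul_sub_sub_le hα hT
    _ ≤ α * (2 * |(γ 0).1|) ^ (α - 1) * T * T := by gcongr; linarith
    _ = _ := by rw [Real.mul_rpow two_pos.le hx.le]; ring

end IsHorizontal

/-- The concatenation of two curves: follow `γ` up to time `T`, then `η`. -/
noncomputable def concatAt {E : Type*} (T : ℝ) (γ η : ℝ → E) (t : ℝ) : E :=
  if t ≤ T then γ t else η (t - T)

section Concat

variable {E : Type*} {γ η : ℝ → E} {T t : ℝ}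

lemma concatAt_of_le (ht : t ≤ T) : concatAt T γ η t = γ t := if_pos ht

lemma concatAt_of_ge (h : γ T = η 0) (ht : T ≤ t) : concatAt T γ η t = η (t - T) := by
  rcases ht.eq_or_lt with rfl | ht
  · rw [concatAt_of_le le_rfl, h, sub_self]
  · exact if_neg ht.not_ge

lemma concatAt_eventuallyEq_left (ht : t < T) : concatAt T γ η =ᶠ[𝓝 t] γ := by
  filter_upwards [Iio_mem_nhds ht] with s hs using concatAt_of_le (le_of_lt hs)

lemma concatAt_eventuallyEq_right (h : γ T = η 0) (ht : T < t) :
    concatAt T γ η =ᶠ[𝓝 t] fun s ↦ η (s - T) := by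
  filter_upwards [Ioi_mem_nhds ht] with s hs using concatAt_of_ge h (le_of_lt hs)

lemma lipschitzOnWith_concatAt {E : Type*} [PseudoMetricSpace E] {γ η : ℝ → E} {K L : NNReal}
    {S : ℝ} (hγ : LipschitzOnWith K γ (Icc 0 T)) (hη : LipschitzOnWith L η (Icc 0 S))
    (h : γ T = η 0) : LipschitzOnWith (max K L) (concatAt T γ η) (Icc 0 (T + S)) := by
  refine lipschitzOnWith_Icc_of_Icc_of_Icc (b := T) (fun s hs t ht ↦ ?_) (fun s hs t ht ↦ ?_)
  · rw [concatAt_of_le hs.2, concatAt_of_le ht.2]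
    exact hγ.weaken (le_max_left _ _) hs ht
  · rw [concatAt_of_ge h hs.1, concatAt_of_ge h ht.1, ← edist_sub_right s t T]
    exact hη.weaken (le_max_right _ _) ⟨by linarith [hs.1], by linarith [hs.2]⟩
      ⟨by linarith [ht.1], by linarith [ht.2]⟩

end Concat

lemma IsHorizontal.concatAt {S : ℝ} {η : ℝ → ℝ × ℝ × ℝ} (hγ : IsHorizontal α T γ)
    (hη : IsHorizontal α S η) (h : γ T = η 0) : IsHorizontal α (T + S) (concatAt T γ η) := by
  obtain ⟨⟨K, hK⟩, a₁, a₂, ma₁, ma₂, ha, hda⟩ := hγ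
  obtain ⟨⟨L, hL⟩, b₁, b₂, mb₁, mb₂, hb, hdb⟩ := hη
  refine ⟨⟨max K L, lipschitzOnWith_concatAt hK hL h⟩, fun t ↦ if t < T then a₁ t else b₁ (t - T),
    fun t ↦ if t < T then a₂ t else b₂ (t - T),
    .ite measurableSet_Iio ma₁ (by fun_prop), .ite measurableSet_Iio ma₂ (by fun_prop),
    fun t ↦ ?_, ?_⟩
  · by_cases ht : t < T
    · simpa [ht] using ha t
    · simpa [ht] using hb (t - T)
  rw [ae_restrict_iff' measurableSet_Ioo] at hda hdb ⊢
  filter_upwards [hda, (measurePreserving_sub_right volume T).quasiMeasurePreserving.ae hdb,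
    Measure.ae_ne volume T] with t hγt hηt htT ht
  rcases htT.lt_or_gt with htT | htT
  · obtain ⟨d₁, d₂, d₃⟩ := hγt ⟨ht.1, htT⟩
    have heq := concatAt_eventuallyEq_left (γ := γ) (η := η) htT
    simp only [htT, if_true, concatAt_of_le htT.le]
    exact ⟨d₁.congr_of_eventuallyEq (heq.fun_comp Prod.fst),
      d₂.congr_of_eventuallyEq (heq.fun_comp fun q ↦ q.2.1),
      d₃.congr_of_eventuallyEq (heq.fun_comp fun q ↦ q.2.2)⟩
  · obtain ⟨d₁, d₂, d₃⟩ := hηt ⟨by linarith, by linarith [ht.2]⟩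
    have heq := concatAt_eventuallyEq_right h htT
    simp only [htT.not_gt, if_false, concatAt_of_ge h htT.le]
    exact ⟨(d₁.comp_sub_const t T).congr_of_eventuallyEq (heq.fun_comp Prod.fst),
      (d₂.comp_sub_const t T).congr_of_eventuallyEq (heq.fun_comp fun q ↦ q.2.1),
      (d₃.comp_sub_const t T).congr_of_eventuallyEq (heq.fun_comp fun q ↦ q.2.2)⟩

lemma isHorizontal_line {x y z e₁ e₂ w : ℝ} (he : e₁ ^ 2 + e₂ ^ 2 ≤ 1)
    (hw : ∀ t, w = |x + t * e₁| ^ α * e₂) :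
    IsHorizontal α T fun t ↦ (x + t * e₁, y + t * e₂, z + t * w) := by
  have hderiv (c b t : ℝ) : HasDerivAt (fun s : ℝ ↦ c + s * b) b t := by
    simpa using ((hasDerivAt_id t).mul_const b).const_add c
  have hsmooth : ContDiff ℝ 1 fun t : ℝ ↦ (x + t * e₁, y + t * e₂, z + t * w) := by fun_prop
  refine ⟨(hsmooth.locallyLipschitz.locallyLipschitzOn
    (s := Icc 0 T)).exists_lipschitzOnWith_of_compact isCompact_Icc, fun _ ↦ e₁, fun _ ↦ e₂,
    measurable_const, measurable_const, fun _ ↦ he,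
    .of_forall fun t ↦ ⟨hderiv _ _ _, hderiv _ _ _, ?_⟩⟩
  simpa only [← hw t] using hderiv z w t

/-- The points `p` and `q` are joined by a horizontal curve on `[0, T]`; the infimum of such
`T > 0` is `ccDist α p q`. -/
def HorizontallyJoined (α T : ℝ) (p q : ℝ × ℝ × ℝ) : Prop :=
  ∃ γ, IsHorizontal α T γ ∧ γ 0 = p ∧ γ T = q

namespace HorizontallyJoined

lemma trans {S : ℝ} {p q r : ℝ × ℝ × ℝ} (hpq : HorizontallyJoined α T p q)
    (hqr : HorizontallyJoined α S q r) (hT : 0 ≤ T) (hS : 0 ≤ S) :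
    HorizontallyJoined α (T + S) p r := by
  obtain ⟨γ, hγ, hγ₀, hγT⟩ := hpq
  obtain ⟨η, hη, hη₀, hηS⟩ := hqr
  have h : γ T = η 0 := hγT.trans hη₀.symm
  refine ⟨concatAt T γ η, hγ.concatAt hη h, ?_, ?_⟩
  · rw [concatAt_of_le hT, hγ₀]
  · rw [concatAt_of_ge h (by linarith), add_sub_cancel_left, hηS]

variable (α) (x y z : ℝ)

lemma along_fst (x' : ℝ) : HorizontallyJoined α |x' - x| (x, y, z) (x', y, z) := by
  rcases abs_cases (x' - x) with ⟨hx, -⟩ | ⟨hx, -⟩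
  · exact ⟨_, isHorizontal_line (x := x) (y := y) (z := z) (e₁ := 1) (e₂ := 0) (w := 0)
      (by norm_num) (by simp), by simp, by simp [hx]⟩
  · exact ⟨_, isHorizontal_line (x := x) (y := y) (z := z) (e₁ := -1) (e₂ := 0) (w := 0)
      (by norm_num) (by simp), by simp, by simp [hx]⟩

lemma along_snd (a : ℝ) : HorizontallyJoined α |a| (x, y, z) (x, y + a, z + |x| ^ α * a) := by
  rcases abs_cases a with ⟨ha, -⟩ | ⟨ha, -⟩
  · exact ⟨_, isHorizontal_line (x := x) (y := y) (z := z) (e₁ := 0) (e₂ := 1) (w := |x| ^ α)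
      (by norm_num) (by simp), by simp, by simp [ha, mul_comm]⟩
  · exact ⟨_, isHorizontal_line (x := x) (y := y) (z := z) (e₁ := 0) (e₂ := -1)
      (w := -|x| ^ α) (by norm_num) (by simp), by simp, by simp [ha, mul_comm]⟩

end HorizontallyJoined

end HorizontalCurves

section Chains

/-- A chain starts at `(x, y, 0)` and follows `X₂` for a time `a`, then `X₁` to the abscissa `ξ`,
where `|x| < |ξ|`, then `-X₂` until it is back in the plane `z = 0`: the last leg takes the time
`a * (|x| / |ξ|) ^ α`, so that the `y`-coordinate increases by `a * chainShift α x ξ` in total. -/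
noncomputable def chainShift (α x ξ : ℝ) : ℝ :=
  1 - (|x| / |ξ|) ^ α

@[fun_prop]
lemma measurable_chainShift {α : ℝ} {X : Type*} [MeasurableSpace X] {g h : X → ℝ}
    (hg : Measurable g) (hh : Measurable h) : Measurable fun t ↦ chainShift α (g t) (h t) := by
  unfold chainShift; fun_prop

lemma chainShift_le_one (α x ξ : ℝ) : chainShift α x ξ ≤ 1 :=
  sub_le_self 1 (by positivity)

variable {α x ξ : ℝ}

lemma abs_sub_abs_le_chainShift_mul (hα : 1 ≤ α) (h : |x| < |ξ|) :
    |ξ| - |x| ≤ chainShift α x ξ * |ξ| := by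
  have hξ : 0 < |ξ| := (abs_nonneg x).trans_lt h
  calc |ξ| - |x| = (1 - |x| / |ξ|) * |ξ| := by field_simp
    _ ≤ chainShift α x ξ * |ξ| := by
      gcongr
      exact one_sub_le_one_sub_rpow hα ⟨by positivity, (div_le_one hξ).2 h.le⟩

lemma chainShift_mul_le (hα : 1 ≤ α) (h : |x| < |ξ|) :
    chainShift α x ξ * |ξ| ≤ α * (|ξ| - |x|) := by
  have hξ : 0 < |ξ| := (abs_nonneg x).trans_lt h
  have hratio : |x| / |ξ| ∈ Icc (0 : ℝ) 1 := ⟨by positivity, (div_le_one hξ).2 h.le⟩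
  have hκ : chainShift α x ξ ≤ α * (1 - |x| / |ξ|) := by
    have := abs_rpow_sub_rpow_le hα (right_mem_Icc.2 zero_le_one) hratio
    rw [Real.one_rpow, Real.one_rpow, mul_one, abs_of_nonneg (sub_nonneg.2 hratio.2)] at this
    exact (le_abs_self _).trans this
  calc chainShift α x ξ * |ξ| ≤ α * (1 - |x| / |ξ|) * |ξ| := by gcongr
    _ = α * (|ξ| - |x|) := by field_simp

lemma chainShift_pos (hα : 1 ≤ α) (h : |x| < |ξ|) : 0 < chainShift α x ξ :=
  pos_of_mul_pos_left ((sub_pos.2 h).trans_le (abs_sub_abs_le_chainShift_mul hα h))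
    (abs_nonneg ξ)

lemma one_sub_chainShift_mul_rpow (h : |x| < |ξ|) :
    (1 - chainShift α x ξ) * |ξ| ^ α = |x| ^ α := by
  have hξ : 0 < |ξ| := (abs_nonneg x).trans_lt h
  rw [chainShift, sub_sub_cancel, Real.div_rpow (abs_nonneg x) hξ.le,
    div_mul_cancel₀ _ (Real.rpow_pos_of_pos hξ α).ne']

lemma horizontallyJoined_chain (h : |x| < |ξ|) (y a : ℝ) :
    HorizontallyJoined α (|a| + |ξ - x| + |-(a * (1 - chainShift α x ξ))|)
      (x, y, 0) (ξ, y + a * chainShift α x ξ, 0) := by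
  have out := HorizontallyJoined.along_snd α x y 0 a
  have across := HorizontallyJoined.along_fst α x (y + a) (0 + |x| ^ α * a) ξ
  have back := HorizontallyJoined.along_snd α ξ (y + a) (0 + |x| ^ α * a)
    (-(a * (1 - chainShift α x ξ)))
  convert (out.trans across (abs_nonneg _) (abs_nonneg _)).trans back (by positivity)
    (abs_nonneg _) using 3
  · ring
  · linear_combination a * one_sub_chainShift_mul_rpow (α := α) h

end Chains

section CarnotCaratheodory

variable {α : ℝ}

lemma ccDist_le {T : ℝ} {p q : ℝ × ℝ × ℝ} (hT : 0 < T) (h : HorizontallyJoined α T p q) :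
    ccDist α p q ≤ T :=
  csInf_le ⟨0, fun _ ht ↦ ht.1.le⟩ ⟨hT, h⟩

lemma exists_horizontallyJoined_of_abs_lt (hα : 1 ≤ α) {x x' : ℝ} (hx : |x| < |x'|) (y y' : ℝ) :
    ∃ T, 0 < T ∧ T ≤ |x' - x| + 2 * |y' - y| * |x'| / (|x'| - |x|) ∧
      HorizontallyJoined α T (x, y, 0) (x', y', 0) := by
  set κ := chainShift α x x'
  have hκ : 0 < κ := chainShift_pos hα hx
  set a := (y' - y) / κ
  have hy' : y' = y + a * κ := by rw [div_mul_cancel₀ _ hκ.ne']; ring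
  have hback : |-(a * (1 - κ))| ≤ |a| := by
    rw [abs_neg, abs_mul, abs_of_nonneg (sub_nonneg.2 (chainShift_le_one α x x'))]
    exact mul_le_of_le_one_right (abs_nonneg a) (by linarith)
  have hout : |a| ≤ |y' - y| * |x'| / (|x'| - |x|) := by
    rw [abs_div, abs_of_pos hκ, div_le_div_iff₀ hκ (sub_pos.2 hx)]
    calc |y' - y| * (|x'| - |x|) ≤ |y' - y| * (κ * |x'|) := by
          gcongr; exact abs_sub_abs_le_chainShift_mul hα hx
      _ = |y' - y| * |x'| * κ := by ring
  have hx' : 0 < |x' - x| := (sub_pos.2 hx).trans_le (abs_sub_abs_le_abs_sub x' x)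
  refine ⟨|a| + |x' - x| + |-(a * (1 - κ))|, by positivity, ?_, hy' ▸
    horizontallyJoined_chain hx y a⟩
  rw [mul_assoc, mul_div_assoc]
  linarith

lemma exists_horizontallyJoined (hα : 1 ≤ α) (u v : ℝ × ℝ) :
    ∃ T, 0 < T ∧ HorizontallyJoined α T (u.1, u.2, 0) (v.1, v.2, 0) := by
  obtain ⟨T, hT, -, h⟩ := exists_horizontallyJoined_of_abs_lt hα (x := u.1) (x' := |u.1| + 1)
    ((lt_add_one _).trans_le (le_abs_self _)) u.2 v.2
  exact ⟨_, by positivity,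
    h.trans (.along_fst α (|u.1| + 1) v.2 0 v.1) hT.le (abs_nonneg _)⟩

lemma le_ccDist (hα : 1 ≤ α) {u v : ℝ × ℝ} {c : ℝ}
    (h : ∀ T γ, 0 < T → IsHorizontal α T γ → γ 0 = (u.1, u.2, 0) → γ T = (v.1, v.2, 0) → c ≤ T) :
    c ≤ ccDist α (u.1, u.2, 0) (v.1, v.2, 0) :=
  le_csInf (exists_horizontallyJoined hα u v)
    fun T ⟨hT, γ, hγ, h₀, hγT⟩ ↦ h T γ hT hγ h₀ hγT

lemma abs_fst_sub_le_ccDist (hα : 1 ≤ α) (u v : ℝ × ℝ) :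
    |u.1 - v.1| ≤ ccDist α (u.1, u.2, 0) (v.1, v.2, 0) :=
  le_ccDist hα fun T γ hT hγ h₀ hγT ↦ by
    simpa only [h₀, hγT, abs_sub_comm] using hγ.abs_fst_sub_le hT.le

lemma abs_snd_sub_le_ccDist (hα : 1 ≤ α) (u v : ℝ × ℝ) :
    |u.2 - v.2| ≤ ccDist α (u.1, u.2, 0) (v.1, v.2, 0) :=
  le_ccDist hα fun T γ hT hγ h₀ hγT ↦ by
    simpa only [h₀, hγT, abs_sub_comm] using hγ.abs_snd_sub_le hT.le

lemma abs_fst_mul_abs_snd_sub_le_ccDist_sq (hα : 1 ≤ α) (u v : ℝ × ℝ) :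
    |u.1| * |u.2 - v.2| ≤ α * 2 ^ (α - 1) * ccDist α (u.1, u.2, 0) (v.1, v.2, 0) ^ 2 := by
  have hA : 0 < α * (2 : ℝ) ^ (α - 1) := by positivity
  have hsqrt : √(|u.1| * |u.2 - v.2| / (α * 2 ^ (α - 1))) ≤
      ccDist α (u.1, u.2, 0) (v.1, v.2, 0) := by
    refine le_ccDist hα fun T γ hT hγ h₀ hγT ↦ ?_
    rw [Real.sqrt_le_left hT.le, div_le_iff₀' hA]
    simpa only [h₀, hγT, abs_sub_comm] using
      hγ.abs_fst_mul_abs_snd_sub_le hα hT.le (by rw [h₀]) (by rw [hγT])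
  exact (div_le_iff₀' hA).1 (Real.sqrt_le_iff.1 hsqrt).2

end CarnotCaratheodory

section BallMeasure

variable {α : ℝ}

lemma ofReal_mul_volume_le_planeMeasure_prod {c : ℝ} {A B : Set ℝ} (hA : MeasurableSet A)
    (hB : MeasurableSet B) (hc : ∀ x ∈ A, c ≤ |x| ^ α) :
    ENNReal.ofReal c * (volume A * volume B) ≤ planeMeasure α (A ×ˢ B) := by
  rw [planeMeasure, withDensity_apply _ (hA.prod hB), ← Measure.prod_prod, ← setLIntegral_const]
  exact setLIntegral_mono' (hA.prod hB) fun u hu ↦ ENNReal.ofReal_le_ofReal (hc _ hu.1)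

lemma exists_measurableSet_abs_mem_Ioo (x : ℝ) {a : ℝ} (ha : 0 ≤ a) (b : ℝ) :
    ∃ A : Set ℝ, MeasurableSet A ∧ volume A = ENNReal.ofReal (b - a) ∧
      ∀ ξ ∈ A, |ξ| ∈ Ioo a b ∧ 0 ≤ ξ * x := by
  rcases le_total 0 x with hx | hx
  · refine ⟨Ioo a b, measurableSet_Ioo, Real.volume_Ioo, fun ξ hξ ↦ ?_⟩
    have hξ₀ : 0 < ξ := ha.trans_lt hξ.1
    exact ⟨by rwa [abs_of_pos hξ₀], by positivity⟩
  · refine ⟨Ioo (-b) (-a), measurableSet_Ioo, by rw [Real.volume_Ioo]; ring_nf, fun ξ hξ ↦ ?_⟩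
    have hξ₀ : ξ < 0 := hξ.2.trans_le (by linarith)
    exact ⟨by rw [abs_of_neg hξ₀]; exact ⟨by linarith [hξ.2], by linarith [hξ.1]⟩,
      mul_nonneg_of_nonpos_of_nonpos hξ₀.le hx⟩

lemma abs_sub_eq_abs_abs_sub_abs {a b : ℝ} (h : 0 ≤ a * b) : |a - b| = |(|a| - |b|)| := by
  rw [← sq_eq_sq₀ (abs_nonneg _) (abs_nonneg _), sq_abs, sq_abs, sub_sq, sub_sq, sq_abs, sq_abs,
    mul_assoc 2 |a|, ← abs_mul, abs_of_nonneg h, mul_assoc]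

lemma ccDist_lt_of_mem_box (hα : 1 ≤ α) {x y x' y' r : ℝ} (hr : 0 < r)
    (hx' : |x'| ∈ Ioo (|x| + r / 4) (|x| + r / 2)) (hxx' : 0 ≤ x' * x)
    (hy : |y' - y| < r ^ 2 / (32 * (|x| + r))) :
    ccDist α (x, y, 0) (x', y', 0) < r := by
  have hgap : 0 < |x'| - |x| := by linarith [hx'.1]
  obtain ⟨T, hT, hTle, hjoin⟩ :=
    exists_horizontallyJoined_of_abs_lt hα (sub_pos.1 hgap) y y'
  refine ((ccDist_le hT hjoin).trans hTle).trans_lt ?_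
  have hhoriz : |x' - x| < r / 2 := by
    rw [abs_sub_eq_abs_abs_sub_abs hxx', abs_of_pos hgap]; linarith [hx'.2]
  have hvert : 2 * |y' - y| * |x'| / (|x'| - |x|) ≤ r / 4 := by
    rw [div_le_iff₀ hgap]
    rw [lt_div_iff₀ (by positivity)] at hy
    calc 2 * |y' - y| * |x'| ≤ 2 * |y' - y| * (|x| + r) := by gcongr; linarith [hx'.2]
      _ ≤ r / 4 * (r / 4) := by linarith
      _ ≤ r / 4 * (|x'| - |x|) := by gcongr; linarith [hx'.1]
  linarith

lemma le_planeMeasure_ccBall (hα : 1 ≤ α) (u : ℝ × ℝ) {r : ℝ} (hr : 0 < r) :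
    ENNReal.ofReal ((1 / 4) ^ α / 64 * (r ^ 3 * (|u.1| + r) ^ (α - 1))) ≤
      planeMeasure α {v | ccDist α (u.1, u.2, 0) (v.1, v.2, 0) < r} := by
  obtain ⟨x, y⟩ := u
  have hxr : 0 < |x| + r := by positivity
  set t := r ^ 2 / (32 * (|x| + r)) with ht
  obtain ⟨A, hA, hvolA, hmemA⟩ := exists_measurableSet_abs_mem_Ioo x
    (by positivity : 0 ≤ |x| + r / 4) (|x| + r / 2)
  calc
    _ = ENNReal.ofReal (((|x| + r) / 4) ^ α) * (volume A * volume (Metric.ball y t)) := by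
      rw [hvolA, Real.volume_ball, ← ENNReal.ofReal_mul (by linarith),
        ← ENNReal.ofReal_mul (by positivity), div_eq_mul_one_div (|x| + r),
        Real.mul_rpow hxr.le (by norm_num), ← sub_add_cancel α 1, Real.rpow_add_one hxr.ne', ht,
        sub_add_cancel]
      congr 1
      field_simp
      ring
    _ ≤ planeMeasure α (A ×ˢ Metric.ball y t) := by
      refine ofReal_mul_volume_le_planeMeasure_prod hA Metric.isOpen_ball.measurableSet
        fun ξ hξ ↦ Real.rpow_le_rpow (by positivity) ?_ (by linarith)
      linarith [(hmemA ξ hξ).1.1, abs_nonneg x]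
    _ ≤ _ := measure_mono fun v hv ↦
      ccDist_lt_of_mem_box hα hr (hmemA _ hv.1).1 (hmemA _ hv.1).2 hv.2

end BallMeasure

section QuasiDistance

/-- An explicit symmetric quasi-distance on the plane `z = 0`, comparable with `ccDist` there. -/
noncomputable def quasiDist (u v : ℝ × ℝ) : ℝ :=
  |u.1 - v.1| + |u.2 - v.2| + √(|u.1| * |u.2 - v.2|) + √(|v.1| * |u.2 - v.2|)

/-- The scale `m` of a pair of points at quasi-distance `δ`: the `μ`-measure of the ball through
the pair is comparable with `δ ^ 3 * m ^ (α - 1)`. -/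
noncomputable def pairScale (u v : ℝ × ℝ) : ℝ :=
  |u.1| + |v.1| + quasiDist u v

lemma quasiDist_comm (u v : ℝ × ℝ) : quasiDist u v = quasiDist v u := by
  rw [quasiDist, quasiDist, abs_sub_comm u.1, abs_sub_comm u.2]; ring

lemma pairScale_comm (u v : ℝ × ℝ) : pairScale u v = pairScale v u := by
  rw [pairScale, pairScale, quasiDist_comm, add_comm |u.1|]

section Measurability

variable {X : Type*} [MeasurableSpace X] {g h : X → ℝ × ℝ}

@[fun_prop]
lemma measurable_quasiDist (hg : Measurable g) (hh : Measurable h) :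
    Measurable fun t ↦ quasiDist (g t) (h t) := by
  unfold quasiDist; fun_prop

@[fun_prop]
lemma measurable_pairScale (hg : Measurable g) (hh : Measurable h) :
    Measurable fun t ↦ pairScale (g t) (h t) := by
  unfold pairScale; fun_prop

end Measurability

variable (u v : ℝ × ℝ)

lemma quasiDist_nonneg : 0 ≤ quasiDist u v := by
  unfold quasiDist; positivity

lemma pairScale_nonneg : 0 ≤ pairScale u v :=
  add_nonneg (by positivity) (quasiDist_nonneg u v)

lemma abs_fst_sub_le_quasiDist : |u.1 - v.1| ≤ quasiDist u v := by
  unfold quasiDist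
  linarith [abs_nonneg (u.2 - v.2), Real.sqrt_nonneg (|u.1| * |u.2 - v.2|),
    Real.sqrt_nonneg (|v.1| * |u.2 - v.2|)]

lemma abs_snd_sub_le_quasiDist : |u.2 - v.2| ≤ quasiDist u v := by
  unfold quasiDist
  linarith [abs_nonneg (u.1 - v.1), Real.sqrt_nonneg (|u.1| * |u.2 - v.2|),
    Real.sqrt_nonneg (|v.1| * |u.2 - v.2|)]

lemma abs_fst_mul_abs_snd_sub_le_quasiDist_sq : |u.1| * |u.2 - v.2| ≤ quasiDist u v ^ 2 := by
  refine (Real.sqrt_le_iff.1 ?_).2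
  unfold quasiDist
  linarith [abs_nonneg (u.1 - v.1), abs_nonneg (u.2 - v.2),
    Real.sqrt_nonneg (|v.1| * |u.2 - v.2|)]

lemma pairScale_mul_abs_snd_sub_le : pairScale u v * |u.2 - v.2| ≤ 3 * quasiDist u v ^ 2 := by
  have hu := abs_fst_mul_abs_snd_sub_le_quasiDist_sq u v
  have hv := abs_fst_mul_abs_snd_sub_le_quasiDist_sq v u
  rw [quasiDist_comm, abs_sub_comm] at hv
  have hδ := mul_le_mul_of_nonneg_left (abs_snd_sub_le_quasiDist u v) (quasiDist_nonneg u v)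
  calc pairScale u v * |u.2 - v.2|
      = |u.1| * |u.2 - v.2| + |v.1| * |u.2 - v.2| + quasiDist u v * |u.2 - v.2| := by
        rw [pairScale]; ring
    _ ≤ 3 * quasiDist u v ^ 2 := by linarith

lemma pairScale_le : pairScale u v ≤ 2 * (|u.1| + quasiDist u v) := by
  unfold pairScale
  linarith [abs_sub_abs_le_abs_sub v.1 u.1, abs_sub_comm u.1 v.1, abs_fst_sub_le_quasiDist u v]

variable {u v}

lemma quasiDist_pos (h : u ≠ v) : 0 < quasiDist u v := by
  refine (quasiDist_nonneg u v).lt_of_ne' fun h₀ ↦ h ?_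
  have h₁ := abs_fst_sub_le_quasiDist u v
  have h₂ := abs_snd_sub_le_quasiDist u v
  rw [h₀, abs_nonpos_iff, sub_eq_zero] at h₁ h₂
  exact Prod.ext h₁ h₂

end QuasiDistance

section Kernel

variable {α : ℝ}

lemma exists_quasiDist_le_mul_ccDist (hα : 1 ≤ α) :
    ∃ L : ℝ, 1 ≤ L ∧ ∀ u v, quasiDist u v ≤ L * ccDist α (u.1, u.2, 0) (v.1, v.2, 0) := by
  set A := α * (2 : ℝ) ^ (α - 1)
  have : 0 ≤ A := by positivity
  refine ⟨2 + 2 * √(A + 1), by linarith [Real.sqrt_nonneg (A + 1)], fun u v ↦ ?_⟩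
  set d := ccDist α (u.1, u.2, 0) (v.1, v.2, 0)
  have h₁ : |u.1 - v.1| ≤ d := abs_fst_sub_le_ccDist hα u v
  have h₂ : |u.2 - v.2| ≤ d := abs_snd_sub_le_ccDist hα u v
  have h₃ : |u.1| * |u.2 - v.2| ≤ A * d ^ 2 := abs_fst_mul_abs_snd_sub_le_ccDist_sq hα u v
  have hd : 0 ≤ d := (abs_nonneg _).trans h₁
  have hsqrt {t : ℝ} (ht : t ≤ (A + 1) * d ^ 2) : √t ≤ √(A + 1) * d := by
    rw [← Real.sqrt_sq hd, ← Real.sqrt_mul (by positivity)]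
    exact Real.sqrt_le_sqrt ht
  have hv : |v.1| * |u.2 - v.2| ≤ (A + 1) * d ^ 2 :=
    calc |v.1| * |u.2 - v.2| ≤ (|u.1| + |u.1 - v.1|) * |u.2 - v.2| := by
          gcongr; linarith [abs_sub_abs_le_abs_sub v.1 u.1, abs_sub_comm u.1 v.1]
      _ = |u.1| * |u.2 - v.2| + |u.1 - v.1| * |u.2 - v.2| := add_mul _ _ _
      _ ≤ A * d ^ 2 + d * d := by gcongr
      _ = (A + 1) * d ^ 2 := by ring
  unfold quasiDist
  linarith [hsqrt (h₃.trans (by linarith [sq_nonneg d])), hsqrt hv]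

lemma exists_mul_rpow_le_rpow_mul_planeMeasure_ccBall (hα : 1 ≤ α) {p : ℝ} (hp : 1 < p) :
    ∃ c : ℝ, 0 < c ∧ ∀ u v : ℝ × ℝ, u ≠ v →
      ENNReal.ofReal (c * (quasiDist u v ^ (p + 2) * pairScale u v ^ (α - 1))) ≤
        ENNReal.ofReal (ccDist α (u.1, u.2, 0) (v.1, v.2, 0) ^ (p - 1)) *
          planeMeasure α {v' | ccDist α (u.1, u.2, 0) (v'.1, v'.2, 0) <
            ccDist α (u.1, u.2, 0) (v.1, v.2, 0)} := by
  obtain ⟨L, hL, hδL⟩ := exists_quasiDist_le_mul_ccDist hα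
  refine ⟨(1 / 4) ^ α / 64 / (L ^ (p + 2) * (2 * L) ^ (α - 1)), by positivity, fun u v huv ↦ ?_⟩
  have hδd := hδL u v
  set d := ccDist α (u.1, u.2, 0) (v.1, v.2, 0)
  have hd : 0 < d := pos_of_mul_pos_right ((quasiDist_pos huv).trans_le hδd) (by linarith)
  have hm : pairScale u v ≤ 2 * L * (|u.1| + d) := by
    linarith [pairScale_le u v, le_mul_of_one_le_left (abs_nonneg u.1) hL]
  have hδm : quasiDist u v ^ (p + 2) * pairScale u v ^ (α - 1) ≤
      L ^ (p + 2) * (2 * L) ^ (α - 1) * (d ^ (p + 2) * (|u.1| + d) ^ (α - 1)) :=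
    calc _ ≤ (L * d) ^ (p + 2) * (2 * L * (|u.1| + d)) ^ (α - 1) := by
          gcongr
          exacts [Real.rpow_nonneg (pairScale_nonneg u v) _, quasiDist_nonneg u v,
            pairScale_nonneg u v]
      _ = _ := by
          rw [Real.mul_rpow (by positivity) hd.le, Real.mul_rpow (by positivity) (by positivity)]
          ring
  have hdp : d ^ (p + 2) = d ^ (p - 1) * d ^ 3 := by
    rw [← Real.rpow_natCast, ← Real.rpow_add hd]; norm_num; ring_nf
  calc
    _ ≤ ENNReal.ofReal ((1 / 4) ^ α / 64 * (d ^ (p + 2) * (|u.1| + d) ^ (α - 1))) := by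
      refine ENNReal.ofReal_le_ofReal ?_
      rw [div_mul_eq_mul_div, mul_div_assoc]
      gcongr
      exact (div_le_iff₀' (by positivity)).2 hδm
    _ = ENNReal.ofReal (d ^ (p - 1)) *
        ENNReal.ofReal ((1 / 4) ^ α / 64 * (d ^ 3 * (|u.1| + d) ^ (α - 1))) := by
      rw [← ENNReal.ofReal_mul (by positivity), hdp]; ring_nf
    _ ≤ _ := by gcongr; exact le_planeMeasure_ccBall hα u hd

end Kernel

section HorizontalGradient

/-- The integral of `g` along the leg of a chain that follows `X₂` for a time `a` from
`(x, y, 0)`. -/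
noncomputable def verticalLeg (α : ℝ) (g : ℝ × ℝ × ℝ → ℝ≥0∞) (x y a : ℝ) : ℝ≥0∞ :=
  ∫⁻ s in Ioo 0 a, g (x, y + s, |x| ^ α * s)

/-- The integral of `g` along the leg of a chain that follows `X₁` from `(x, y, z)`, extended to
all abscissae at distance at most `R` from `x`. -/
noncomputable def horizontalLeg (g : ℝ × ℝ × ℝ → ℝ≥0∞) (R x y z : ℝ) : ℝ≥0∞ :=
  ∫⁻ σ in Metric.closedBall x R, g (σ, y, z)

/-- The oscillation of `F` between the two ends of any chain of duration `a` is at most the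
integral of `g` over the three legs, the horizontal and the last one being enlarged. -/
def IsChainUpperGradient (α : ℝ) (g : ℝ × ℝ × ℝ → ℝ≥0∞) (F : ℝ × ℝ → ℝ) : Prop :=
  ∀ ⦃x ξ a R : ℝ⦄, |x| < |ξ| → 0 < a → |ξ - x| ≤ R → ∀ y,
    ‖F (x, y) - F (ξ, y + a * chainShift α x ξ)‖ₑ ≤ verticalLeg α g x y a +
      horizontalLeg g R x (y + a) (|x| ^ α * a) +
      verticalLeg α g ξ (y + a * chainShift α x ξ) a

/-- The length of the horizontal gradient of `f` on the half-space, extended by `0`. -/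
noncomputable def enormXGrad (α : ℝ) (f : ℝ × ℝ × ℝ → ℝ) : ℝ × ℝ × ℝ → ℝ≥0∞ :=
  upperHalf.indicator fun q ↦ ENNReal.ofReal (XGradNorm α f q)

lemma isClosed_upperHalf : IsClosed upperHalf :=
  isClosed_Ici.preimage (continuous_snd.comp continuous_snd)

lemma uniqueDiffOn_upperHalf : UniqueDiffOn ℝ upperHalf := by
  have hprod : upperHalf = univ ×ˢ univ ×ˢ Ici (0 : ℝ) := by
    ext; simp [upperHalf]
  rw [hprod]
  exact uniqueDiffOn_univ.prod (uniqueDiffOn_univ.prod (uniqueDiffOn_Ici 0))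

variable {α : ℝ} {f : ℝ × ℝ × ℝ → ℝ}

lemma XGradNorm_nonneg (α : ℝ) (f : ℝ × ℝ × ℝ → ℝ) (q : ℝ × ℝ × ℝ) : 0 ≤ XGradNorm α f q :=
  Real.sqrt_nonneg _

lemma continuousOn_XGradNorm (hα : 0 ≤ α) (hf : ContDiffOn ℝ 1 f upperHalf) :
    ContinuousOn (XGradNorm α f) upperHalf := by
  have hdf := hf.continuousOn_fderivWithin uniqueDiffOn_upperHalf le_rfl
  have : Continuous fun q : ℝ × ℝ × ℝ ↦ |q.1| ^ α :=
    continuous_fst.abs.rpow_const fun _ ↦ Or.inr hα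
  exact (((hdf.clm_apply continuousOn_const).pow 2).add
    ((hdf.clm_apply (by fun_prop)).pow 2)).sqrt

lemma measurable_enormXGrad (hα : 0 ≤ α) (hf : ContDiffOn ℝ 1 f upperHalf) :
    Measurable (enormXGrad α f) := by
  classical
  rw [enormXGrad, ← piecewise_eq_indicator]
  exact (ENNReal.continuous_ofReal.comp_continuousOn
    (continuousOn_XGradNorm hα hf)).measurable_piecewise continuousOn_const
    isClosed_upperHalf.measurableSet

lemma lintegral_enormXGrad_rpow (α : ℝ) (f : ℝ × ℝ × ℝ → ℝ) {p : ℝ} (hp : 0 < p) :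
    ∫⁻ q, enormXGrad α f q ^ p = ∫⁻ q in upperHalf, ENNReal.ofReal (XGradNorm α f q ^ p) := by
  rw [← lintegral_indicator isClosed_upperHalf.measurableSet]
  refine lintegral_congr fun q ↦ ?_
  by_cases hq : q ∈ upperHalf
  · rw [enormXGrad, indicator_of_mem hq, indicator_of_mem hq,
      ENNReal.ofReal_rpow_of_nonneg (XGradNorm_nonneg α f q) hp.le]
  · rw [enormXGrad, indicator_of_notMem hq, indicator_of_notMem hq, ENNReal.zero_rpow_of_pos hp]

lemma enorm_sub_le_setLIntegral_segment {E : Type*} [NormedAddCommGroup E] [NormedSpace ℝ E]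
    {S : Set E} {f : E → ℝ} (hf : ContDiffOn ℝ 1 f S) (P V : E) {s₀ s₁ : ℝ} (h : s₀ ≤ s₁)
    (hS : ∀ s ∈ Icc s₀ s₁, P + s • V ∈ S) :
    ‖f (P + s₀ • V) - f (P + s₁ • V)‖ₑ ≤
      ∫⁻ s in Ioo s₀ s₁, ‖fderivWithin ℝ f S (P + s • V) V‖ₑ := by
  rw [← enorm_neg, neg_sub]
  rcases h.eq_or_lt with rfl | hlt
  · simp
  have hc : ContDiffOn ℝ 1 (fun s : ℝ ↦ f (P + s • V)) (Icc s₀ s₁) := hf.comp (by fun_prop) hS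
  refine (enorm_sub_le_lintegral_derivWithin_Icc_of_contDiffOn_Icc hc h).trans_eq ?_
  rw [← restrict_Ioo_eq_restrict_Icc]
  refine setLIntegral_congr_fun measurableSet_Ioo fun s hs ↦ ?_
  have hs' := Ioo_subset_Icc_self hs
  have hline : HasDerivWithinAt (fun s : ℝ ↦ P + s • V) V (Icc s₀ s₁) s := by
    simpa using (((hasDerivAt_id s).smul_const V).const_add P).hasDerivWithinAt
  have hf' := (hf.differentiableOn one_ne_zero _ (hS s hs')).hasFDerivWithinAt
  have hcomp := hf'.comp_hasDerivWithinAt s hline hS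
  exact congrArg _ (hcomp.derivWithin (uniqueDiffOn_Icc hlt s hs'))

lemma enorm_fst_le_enormXGrad {q : ℝ × ℝ × ℝ} (hq : q ∈ upperHalf) :
    ‖fderivWithin ℝ f upperHalf q (1, 0, 0)‖ₑ ≤ enormXGrad α f q := by
  rw [enormXGrad, indicator_of_mem hq, Real.enorm_eq_ofReal_abs]
  exact ENNReal.ofReal_le_ofReal (Real.abs_le_sqrt (le_add_of_nonneg_right (sq_nonneg _)))

lemma enorm_snd_le_enormXGrad {q : ℝ × ℝ × ℝ} (hq : q ∈ upperHalf) :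
    ‖fderivWithin ℝ f upperHalf q (0, 1, |q.1| ^ α)‖ₑ ≤ enormXGrad α f q := by
  rw [enormXGrad, indicator_of_mem hq, Real.enorm_eq_ofReal_abs]
  exact ENNReal.ofReal_le_ofReal (Real.abs_le_sqrt (le_add_of_nonneg_left (sq_nonneg _)))

lemma enorm_sub_le_verticalLeg (hf : ContDiffOn ℝ 1 f upperHalf) (x y : ℝ) {a : ℝ} (ha : 0 ≤ a) :
    ‖f (x, y, 0) - f (x, y + a, |x| ^ α * a)‖ₑ ≤ verticalLeg α (enormXGrad α f) x y a := by
  have hline (s : ℝ) : (x, y, (0 : ℝ)) + s • ((0 : ℝ), (1 : ℝ), |x| ^ α) =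
      (x, y + s, |x| ^ α * s) := by ext <;> simp [mul_comm]
  have hmem {s : ℝ} (hs : 0 ≤ s) : (x, y + s, |x| ^ α * s) ∈ upperHalf :=
    mul_nonneg (by positivity) hs
  have hseg := enorm_sub_le_setLIntegral_segment hf (x, y, 0) (0, 1, |x| ^ α) ha
    fun s hs ↦ (hline s).symm ▸ hmem hs.1
  simp only [hline, add_zero, mul_zero] at hseg
  exact hseg.trans (setLIntegral_mono' measurableSet_Ioo
    fun s hs ↦ enorm_snd_le_enormXGrad (hmem hs.1.le))

lemma enorm_sub_le_horizontalLeg (hf : ContDiffOn ℝ 1 f upperHalf) {x x' R z : ℝ} (hz : 0 ≤ z)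
    (hR : |x' - x| ≤ R) (y : ℝ) :
    ‖f (x, y, z) - f (x', y, z)‖ₑ ≤ horizontalLeg (enormXGrad α f) R x y z := by
  have hline (s : ℝ) : ((0 : ℝ), y, z) + s • ((1 : ℝ), (0 : ℝ), (0 : ℝ)) = (s, y, z) := by
    ext <;> simp
  have hmem (s : ℝ) : (s, y, z) ∈ upperHalf := hz
  have hseg {l u : ℝ} (hlu : l ≤ u) (hsub : Ioo l u ⊆ Metric.closedBall x R) :
      ‖f (l, y, z) - f (u, y, z)‖ₑ ≤ horizontalLeg (enormXGrad α f) R x y z := by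
    have := enorm_sub_le_setLIntegral_segment hf (0, y, z) (1, 0, 0) hlu
      fun s _ ↦ (hline s).symm ▸ hmem s
    simp only [hline] at this
    exact this.trans ((lintegral_mono fun s ↦ enorm_fst_le_enormXGrad (hmem s)).trans
      (lintegral_mono_set hsub))
  have hball := Real.closedBall_eq_Icc ▸ Ioo_subset_Icc_self (a := x - R) (b := x + R)
  obtain ⟨hl, hu⟩ := abs_le.1 hR
  rcases le_total x x' with h | h
  · exact hseg h ((Ioo_subset_Ioo (by linarith) (by linarith)).trans hball)
  · rw [← enorm_neg, neg_sub]
    exact hseg h ((Ioo_subset_Ioo (by linarith) (by linarith)).trans hball)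

lemma isChainUpperGradient_enormXGrad (hα : 1 ≤ α) (hf : ContDiffOn ℝ 1 f upperHalf) :
    IsChainUpperGradient α (enormXGrad α f) fun u ↦ f (u.1, u.2, 0) := by
  intro x ξ a R hx ha hR y
  set κ := chainShift α x ξ
  have hκ : 0 ≤ 1 - κ := sub_nonneg.2 (chainShift_le_one α x ξ)
  have hback : ‖f (ξ, y + a * κ, 0) - f (ξ, y + a, |x| ^ α * a)‖ₑ ≤
      verticalLeg α (enormXGrad α f) ξ (y + a * κ) a := by
    have hleg := enorm_sub_le_verticalLeg (α := α) hf ξ (y + a * κ)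
      (mul_nonneg ha.le hκ)
    rw [show y + a * κ + a * (1 - κ) = y + a by ring,
      show |ξ| ^ α * (a * (1 - κ)) = |x| ^ α * a by
        rw [← one_sub_chainShift_mul_rpow hx]; ring] at hleg
    exact hleg.trans (lintegral_mono_set (Ioo_subset_Ioo_right
      (mul_le_of_le_one_right ha.le (by linarith [chainShift_pos hα hx]))))
  calc
    _ = ‖(f (x, y, 0) - f (x, y + a, |x| ^ α * a)) +
          (f (x, y + a, |x| ^ α * a) - f (ξ, y + a, |x| ^ α * a)) -
          (f (ξ, y + a * κ, 0) - f (ξ, y + a, |x| ^ α * a))‖ₑ := by congr 1; ring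
    _ ≤ ‖f (x, y, 0) - f (x, y + a, |x| ^ α * a)‖ₑ +
          ‖f (x, y + a, |x| ^ α * a) - f (ξ, y + a, |x| ^ α * a)‖ₑ +
          ‖f (ξ, y + a * κ, 0) - f (ξ, y + a, |x| ^ α * a)‖ₑ :=
        enorm_sub_le.trans (add_le_add_left (enorm_add_le _ _) _)
    _ ≤ _ := by
        gcongr
        · exact enorm_sub_le_verticalLeg hf x y ha.le
        · exact enorm_sub_le_horizontalLeg hf (by positivity) hR (y + a)

end HorizontalGradient

section ChainEstimate

/-- The integral of `g ^ p` over the line of all points with abscissa `x` and height `z`. -/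
noncomputable def slicePower (p : ℝ) (g : ℝ × ℝ × ℝ → ℝ≥0∞) (x z : ℝ) : ℝ≥0∞ :=
  ∫⁻ y, g (x, y, z) ^ p

/-- The integral of `verticalLeg ^ p` over the starting points `(x, y, 0)` with abscissa `x`. -/
noncomputable def verticalPower (α p : ℝ) (g : ℝ × ℝ × ℝ → ℝ≥0∞) (x a : ℝ) : ℝ≥0∞ :=
  ∫⁻ y, verticalLeg α g x y a ^ p

/-- The weighted `p`-energy of the oscillation of `F` between the two ends `(x, y)` and
`(ξ, y + a * chainShift α x ξ)` of the chains of duration `a` with `|ξ - x| ≤ C * a`. -/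
noncomputable def chainEnergy (α p C : ℝ) (F : ℝ × ℝ → ℝ) : ℝ≥0∞ :=
  ∫⁻ a in Ioi 0, ENNReal.ofReal (a ^ (-p - 1)) * ∫⁻ x, ENNReal.ofReal (|x| ^ α) *
    ∫⁻ ξ in {ξ ∈ Metric.closedBall x (C * a) | |x| < |ξ|},
      ∫⁻ y, ‖F (x, y) - F (ξ, y + a * chainShift α x ξ)‖ₑ ^ p

variable {α p C : ℝ} {g : ℝ × ℝ × ℝ → ℝ≥0∞}

lemma measurableSet_setOf_mem_closedBall {X : Type*} [MeasurableSpace X] {c r t : X → ℝ}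
    (hc : Measurable c) (hr : Measurable r) (ht : Measurable t) :
    MeasurableSet {q | t q ∈ Metric.closedBall (c q) (r q)} :=
  measurableSet_le (ht.dist hc) hr

lemma lintegral_setLIntegral_closedBall (R : ℝ) {h : ℝ → ℝ≥0∞} (hh : Measurable h) :
    ∫⁻ x, ∫⁻ y in Metric.closedBall x R, h y = ENNReal.ofReal (2 * R) * ∫⁻ y, h y := by
  have hr : MeasurableSet {q : ℝ × ℝ | q.2 ∈ Metric.closedBall q.1 R} :=
    measurableSet_setOf_mem_closedBall measurable_fst measurable_const measurable_snd
  calc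
    _ = ∫⁻ y, ∫⁻ _ in {x | y ∈ Metric.closedBall x R}, h y :=
      setLIntegral_fiber_swap hr (F := fun _ y ↦ h y) (by fun_prop)
    _ = _ := by
      simp only [Metric.mem_closedBall_comm, ofPred_mem_eq, setLIntegral_const,
        Real.volume_closedBall]
      rw [lintegral_mul_const _ hh, mul_comm]

lemma measurable_verticalLeg (hg : Measurable g) :
    Measurable fun q : ℝ × ℝ × ℝ ↦ verticalLeg α g q.1 q.2.1 q.2.2 := by
  have hr : MeasurableSet {q : (ℝ × ℝ × ℝ) × ℝ | 0 < q.2 ∧ q.2 < q.1.2.2} :=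
    (measurableSet_lt measurable_const measurable_snd).inter
      (measurableSet_lt measurable_snd (by fun_prop))
  exact measurable_setLIntegral_fiber hr
    (F := fun q s ↦ g (q.1, q.2.1 + s, |q.1| ^ α * s)) (by fun_prop)

lemma measurable_verticalPower (hg : Measurable g) :
    Measurable fun q : ℝ × ℝ ↦ verticalPower α p g q.1 q.2 :=
  (((measurable_verticalLeg (α := α) hg).comp (f := fun q : (ℝ × ℝ) × ℝ ↦ (q.1.1, q.2, q.1.2))
    (by fun_prop)).pow_const p).lintegral_prod_right'

lemma measurable_slicePower (hg : Measurable g) :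
    Measurable fun q : ℝ × ℝ ↦ slicePower p g q.1 q.2 :=
  Measurable.lintegral_prod_right' (f := fun q : (ℝ × ℝ) × ℝ ↦ g (q.1.1, q.2, q.1.2) ^ p)
    (by fun_prop)

lemma setLIntegral_verticalPower_le (hp : 1 < p) (hg : Measurable g) {x : ℝ} (hx : x ≠ 0) :
    ENNReal.ofReal (|x| ^ α) *
        ∫⁻ a in Ioi 0, ENNReal.ofReal (a ^ (-p)) * verticalPower α p g x a ≤
      ENNReal.ofReal (2 ^ (p - 1) * (2 / (p - 1))) * ∫⁻ z in Ioi 0, slicePower p g x z := by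
  have hc : 0 < |x| ^ α := Real.rpow_pos_of_pos (abs_pos.2 hx) _
  have hV : Measurable fun q : ℝ × ℝ ↦ verticalLeg α g x q.2 q.1 :=
    (measurable_verticalLeg hg).comp (f := fun q : ℝ × ℝ ↦ (x, q.2, q.1)) (by fun_prop)
  have hVa (a : ℝ) : Measurable fun y ↦ verticalLeg α g x y a := hV.comp measurable_prodMk_left
  have hΓ : Measurable (slicePower p g x) :=
    (measurable_slicePower hg).comp (measurable_const.prodMk measurable_id)
  calc
    _ = ENNReal.ofReal (|x| ^ α) * ∫⁻ y, ∫⁻ a in Ioi 0,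
          ENNReal.ofReal (a ^ (-p)) * verticalLeg α g x y a ^ p := by
      rw [← lintegral_lintegral_swap (by fun_prop)]
      simp_rw [lintegral_const_mul _ ((hVa _).pow_const p), verticalPower]
    _ ≤ ENNReal.ofReal (|x| ^ α) * ∫⁻ y, ENNReal.ofReal (2 ^ (p - 1) * (2 / (p - 1))) *
          ∫⁻ s in Ioi 0, g (x, y + s, |x| ^ α * s) ^ p := by
      gcongr
      exact hardy_inequality hp (by fun_prop)
    _ = ENNReal.ofReal (|x| ^ α) * (ENNReal.ofReal (2 ^ (p - 1) * (2 / (p - 1))) *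
          ∫⁻ s in Ioi 0, slicePower p g x (|x| ^ α * s)) := by
      rw [lintegral_const_mul' _ _ ENNReal.ofReal_ne_top,
        lintegral_lintegral_swap (by fun_prop)]
      congr! 4 with s
      exact lintegral_add_right_eq_self (fun y ↦ g (x, y, |x| ^ α * s) ^ p) s
    _ = _ := by
      rw [setLIntegral_Ioi_comp_mul hc hΓ, mul_left_comm, ← mul_assoc (ENNReal.ofReal (|x| ^ α)),
        ← ENNReal.ofReal_mul hc.le, mul_inv_cancel₀ hc.ne', ENNReal.ofReal_one, one_mul]

lemma lintegral_setLIntegral_verticalPower_le (hp : 1 < p) (hg : Measurable g) :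
    ∫⁻ a in Ioi 0, ENNReal.ofReal (a ^ (-p)) *
        ∫⁻ x, ENNReal.ofReal (|x| ^ α) * verticalPower α p g x a ≤
      ENNReal.ofReal (2 ^ (p - 1) * (2 / (p - 1))) *
        ∫⁻ x, ∫⁻ z in Ioi 0, slicePower p g x z := by
  calc
    _ = ∫⁻ x, ENNReal.ofReal (|x| ^ α) *
          ∫⁻ a in Ioi 0, ENNReal.ofReal (a ^ (-p)) * verticalPower α p g x a :=
      lintegral_mul_lintegral_mul_swap (F := fun a x ↦ verticalPower α p g x a) (by fun_prop)
        (by fun_prop) ((measurable_verticalPower hg).comp measurable_swap)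
    _ ≤ ∫⁻ x, ENNReal.ofReal (2 ^ (p - 1) * (2 / (p - 1))) *
          ∫⁻ z in Ioi 0, slicePower p g x z := by
      refine lintegral_mono_ae ?_
      filter_upwards [Measure.ae_ne volume (0 : ℝ)] with x hx
      exact setLIntegral_verticalPower_le hp hg hx
    _ = _ := lintegral_const_mul' _ _ ENNReal.ofReal_ne_top

lemma abs_le_or_of_abs_rpow_mul_le {ρ w x σ : ℝ} (hα : 0 < α) (hρ : 0 < ρ)
    (hρw : ρ ^ α * ρ = 2 * w) (hx : |x| ^ α * |x - σ| ≤ w) :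
    |x| ≤ ρ ∨ |x| ≤ 2 * |σ| ∧ |x - σ| ≤ (3 / 2) ^ α * w / |σ| ^ α := by
  refine or_iff_not_imp_left.2 fun hxρ ↦ ?_
  rw [not_le] at hxρ
  have hnear : |x - σ| < |x| / 2 := by
    have hlt : ρ ^ α * ρ < |x| ^ α * |x| := by gcongr
    have := lt_of_mul_lt_mul_left (b := |x - σ|) (c := |x| / 2) (a := |x| ^ α) (by linarith)
      (by positivity)
    exact this
  have hxσ := abs_sub_abs_le_abs_sub x σ
  have hσx := abs_sub_comm x σ ▸ abs_sub_abs_le_abs_sub σ x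
  have hσ : 0 < |σ| := by linarith
  refine ⟨by linarith, (le_div_iff₀ (by positivity)).2 ?_⟩
  calc
    |x - σ| * |σ| ^ α ≤ |x - σ| * (3 / 2 * |x|) ^ α := by gcongr; linarith
    _ = (3 / 2) ^ α * (|x| ^ α * |x - σ|) := by
      rw [Real.mul_rpow (by norm_num) (abs_nonneg x)]; ring
    _ ≤ (3 / 2) ^ α * w := by gcongr

lemma setLIntegral_abs_rpow_le_of_subset {s : Set ℝ} {M c r : ℝ} (hα : 0 ≤ α) (hM : 0 ≤ M)
    (hsM : ∀ x ∈ s, |x| ≤ M) (hs : s ⊆ Metric.closedBall c r) :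
    ∫⁻ x in s, ENNReal.ofReal (|x| ^ α) ≤ ENNReal.ofReal (M ^ α * (2 * r)) := by
  calc
    _ ≤ ∫⁻ _ in s, ENNReal.ofReal (M ^ α) :=
      setLIntegral_mono measurable_const fun x hx ↦ by gcongr; exact hsM x hx
    _ ≤ ENNReal.ofReal (M ^ α) * ENNReal.ofReal (2 * r) := by
      rw [setLIntegral_const, ← Real.volume_closedBall (a := c)]
      gcongr
    _ = _ := (ENNReal.ofReal_mul (by positivity)).symm

lemma setLIntegral_abs_rpow_le (hα : 0 < α) {w : ℝ} (hw : 0 < w) (σ : ℝ) :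
    ∫⁻ x in {x | |x| ^ α * |x - σ| ≤ w}, ENNReal.ofReal (|x| ^ α) ≤
      ENNReal.ofReal ((4 + 2 * 3 ^ α) * w) := by
  set ρ := (2 * w) ^ (1 / (α + 1)) with hρ
  set τ := (3 / 2) ^ α * w / |σ| ^ α with hτ
  have hρ₀ : 0 < ρ := by positivity
  have hρw : ρ ^ α * ρ = 2 * w := by
    rw [← Real.rpow_add_one hρ₀.ne', hρ, ← Real.rpow_mul (by positivity),
      one_div_mul_cancel (by positivity), Real.rpow_one]
  have hτσ : (2 * |σ|) ^ α * (2 * τ) ≤ 2 * 3 ^ α * w := by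
    rw [show (3 : ℝ) = 2 * (3 / 2) by norm_num, Real.mul_rpow two_pos.le (abs_nonneg σ),
      Real.mul_rpow two_pos.le (by norm_num)]
    calc
      _ = 2 * (2 ^ α * (3 / 2) ^ α) * w * (|σ| ^ α / |σ| ^ α) := by rw [hτ]; ring
      _ ≤ _ := mul_le_of_le_one_right (by positivity) (div_self_le_one _)
  have hsub : {x | |x| ^ α * |x - σ| ≤ w} ⊆
      Metric.closedBall 0 ρ ∪ {x | |x| ≤ 2 * |σ| ∧ |x - σ| ≤ τ} := fun x hx ↦ by
    simpa using abs_le_or_of_abs_rpow_mul_le hα hρ₀ hρw hx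
  calc
    _ ≤ ENNReal.ofReal (ρ ^ α * (2 * ρ)) + ENNReal.ofReal ((2 * |σ|) ^ α * (2 * τ)) := by
      refine (lintegral_mono_set hsub).trans ((lintegral_union_le _ _ _).trans (add_le_add
        (setLIntegral_abs_rpow_le_of_subset hα.le hρ₀.le (by simp) subset_rfl)
        (setLIntegral_abs_rpow_le_of_subset hα.le (by positivity) (fun x hx ↦ hx.1)
          fun x hx ↦ hx.2)))
    _ ≤ _ := by
      rw [← ENNReal.ofReal_add (by positivity) (by positivity)]
      exact ENNReal.ofReal_le_ofReal (by linarith)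

lemma lintegral_abs_rpow_mul_setLIntegral_le (hα : 0 < α) {w : ℝ} (hw : 0 < w) {h : ℝ → ℝ≥0∞}
    (hh : Measurable h) :
    ∫⁻ x, ENNReal.ofReal (|x| ^ α) * ∫⁻ σ in {σ | |x| ^ α * |x - σ| ≤ w}, h σ ≤
      ENNReal.ofReal ((4 + 2 * 3 ^ α) * w) * ∫⁻ σ, h σ := by
  have hr : MeasurableSet {q : ℝ × ℝ | |q.1| ^ α * |q.1 - q.2| ≤ w} :=
    measurableSet_le (by fun_prop) measurable_const
  calc
    _ = ∫⁻ x, ∫⁻ σ in {σ | |x| ^ α * |x - σ| ≤ w}, ENNReal.ofReal (|x| ^ α) * h σ := by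
      simp_rw [lintegral_const_mul' _ _ ENNReal.ofReal_ne_top]
    _ = ∫⁻ σ, ∫⁻ x in {x | |x| ^ α * |x - σ| ≤ w}, ENNReal.ofReal (|x| ^ α) * h σ :=
      setLIntegral_fiber_swap hr (F := fun x σ ↦ ENNReal.ofReal (|x| ^ α) * h σ) (by fun_prop)
    _ ≤ ∫⁻ σ, ENNReal.ofReal ((4 + 2 * 3 ^ α) * w) * h σ := by
      gcongr with σ
      rw [lintegral_mul_const _ (by fun_prop)]
      gcongr
      exact setLIntegral_abs_rpow_le hα hw σ
    _ = _ := lintegral_const_mul' _ _ ENNReal.ofReal_ne_top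

lemma setLIntegral_inv_mul_slicePower_closedBall_eq (hg : Measurable g) {x : ℝ} (hx : x ≠ 0) :
    ∫⁻ a in Ioi 0, ENNReal.ofReal a⁻¹ *
        ∫⁻ σ in Metric.closedBall x (C * a), slicePower p g σ (|x| ^ α * a) =
      ∫⁻ z in Ioi 0, ENNReal.ofReal z⁻¹ *
        ∫⁻ σ in {σ | |x| ^ α * |x - σ| ≤ C * z}, slicePower p g σ z := by
  have hc : 0 < |x| ^ α := Real.rpow_pos_of_pos (abs_pos.2 hx) _
  have hr : MeasurableSet {q : ℝ × ℝ | |x| ^ α * |x - q.2| ≤ C * q.1} :=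
    measurableSet_le (by fun_prop) (by fun_prop)
  have hball (a : ℝ) : Metric.closedBall x (C * a) =
      {σ | |x| ^ α * |x - σ| ≤ C * (|x| ^ α * a)} := by
    ext σ
    rw [Metric.mem_closedBall', Real.dist_eq, mem_ofPred_eq, mul_left_comm,
      mul_le_mul_iff_right₀ hc]
  simp_rw [hball]
  exact setLIntegral_Ioi_inv_mul_comp_mul hc (measurable_setLIntegral_fiber hr
    (F := fun z σ ↦ slicePower p g σ z) ((measurable_slicePower hg).comp measurable_swap))

lemma lintegral_setLIntegral_slicePower_le (hα : 0 < α) (hC : 0 < C) (hg : Measurable g) :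
    ∫⁻ a in Ioi 0, ENNReal.ofReal a⁻¹ * ∫⁻ x, ENNReal.ofReal (|x| ^ α) *
        ∫⁻ σ in Metric.closedBall x (C * a), slicePower p g σ (|x| ^ α * a) ≤
      ENNReal.ofReal ((4 + 2 * 3 ^ α) * C) * ∫⁻ x, ∫⁻ z in Ioi 0, slicePower p g x z := by
  have hΓ : Measurable fun q : ℝ × ℝ ↦ slicePower p g q.1 q.2 := measurable_slicePower hg
  have hball : MeasurableSet {q : (ℝ × ℝ) × ℝ | q.2 ∈ Metric.closedBall q.1.2 (C * q.1.1)} :=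
    measurableSet_setOf_mem_closedBall (by fun_prop) (by fun_prop) (by fun_prop)
  have hregion :
      MeasurableSet {q : (ℝ × ℝ) × ℝ | |q.1.1| ^ α * |q.1.1 - q.2| ≤ C * q.1.2} :=
    measurableSet_le (by fun_prop) (by fun_prop)
  calc
    _ = ∫⁻ x, ENNReal.ofReal (|x| ^ α) * ∫⁻ a in Ioi 0, ENNReal.ofReal a⁻¹ *
          ∫⁻ σ in Metric.closedBall x (C * a), slicePower p g σ (|x| ^ α * a) :=
      lintegral_mul_lintegral_mul_swap (by fun_prop) (by fun_prop)
        (measurable_setLIntegral_fiber hball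
          (F := fun q σ ↦ slicePower p g σ (|q.2| ^ α * q.1))
          (hΓ.comp (f := fun q : (ℝ × ℝ) × ℝ ↦ (q.2, |q.1.2| ^ α * q.1.1)) (by fun_prop)))
    _ = ∫⁻ x, ENNReal.ofReal (|x| ^ α) * ∫⁻ z in Ioi 0, ENNReal.ofReal z⁻¹ *
          ∫⁻ σ in {σ | |x| ^ α * |x - σ| ≤ C * z}, slicePower p g σ z := by
      refine lintegral_congr_ae ?_
      filter_upwards [Measure.ae_ne volume (0 : ℝ)] with x hx
      rw [setLIntegral_inv_mul_slicePower_closedBall_eq hg hx]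
    _ = ∫⁻ z in Ioi 0, ENNReal.ofReal z⁻¹ * ∫⁻ x, ENNReal.ofReal (|x| ^ α) *
          ∫⁻ σ in {σ | |x| ^ α * |x - σ| ≤ C * z}, slicePower p g σ z :=
      lintegral_mul_lintegral_mul_swap (by fun_prop) (by fun_prop)
        (measurable_setLIntegral_fiber hregion (F := fun q σ ↦ slicePower p g σ q.2)
          (hΓ.comp (f := fun q : (ℝ × ℝ) × ℝ ↦ (q.2, q.1.2)) (by fun_prop)))
    _ ≤ ∫⁻ z in Ioi 0, ENNReal.ofReal ((4 + 2 * 3 ^ α) * C) * ∫⁻ σ, slicePower p g σ z := by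
      refine setLIntegral_mono' measurableSet_Ioi fun z hz ↦ ?_
      refine (mul_le_mul_right (lintegral_abs_rpow_mul_setLIntegral_le hα (mul_pos hC hz)
        (h := (slicePower p g · z)) (hΓ.comp measurable_prodMk_right)) _).trans_eq ?_
      rw [← mul_assoc, ← ENNReal.ofReal_mul (inv_nonneg.2 (le_of_lt hz)), ← mul_assoc (4 + _),
        mul_comm z⁻¹, mul_inv_cancel_right₀ (ne_of_gt hz)]
    _ = _ := by
      rw [lintegral_const_mul' _ _ ENNReal.ofReal_ne_top,
        ← lintegral_lintegral_swap hΓ.aemeasurable]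

lemma lintegral_horizontalLeg_rpow_le (hp : 1 < p) (hg : Measurable g) (x a z R : ℝ) :
    ∫⁻ y, horizontalLeg g R x (y + a) z ^ p ≤
      ENNReal.ofReal (2 * R) ^ (p - 1) *
        ∫⁻ σ in Metric.closedBall x R, slicePower p g σ z := by
  calc
    _ ≤ ∫⁻ y, ENNReal.ofReal (2 * R) ^ (p - 1) *
          ∫⁻ σ in Metric.closedBall x R, g (σ, y + a, z) ^ p := by
      gcongr with y
      rw [← Real.volume_closedBall (a := x)]
      exact setLIntegral_rpow_le_measure_mul hp _ (by fun_prop)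
    _ = _ := by
      rw [lintegral_const_mul' _ _
        (ENNReal.rpow_ne_top_of_nonneg (by linarith) ENNReal.ofReal_ne_top),
        lintegral_lintegral_swap (by fun_prop)]
      congr! 3 with σ
      exact lintegral_add_right_eq_self (fun y ↦ g (σ, y, z) ^ p) a

lemma IsChainUpperGradient.lintegral_rpow_le (hp : 1 < p) (hg : Measurable g) {F : ℝ × ℝ → ℝ}
    (hF : IsChainUpperGradient α g F) {x ξ a R : ℝ} (hx : |x| < |ξ|) (ha : 0 < a)
    (hR : |ξ - x| ≤ R) :
    ∫⁻ y, ‖F (x, y) - F (ξ, y + a * chainShift α x ξ)‖ₑ ^ p ≤ 3 ^ (p - 1) *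
      (verticalPower α p g x a + ENNReal.ofReal (2 * R) ^ (p - 1) *
        (∫⁻ σ in Metric.closedBall x R, slicePower p g σ (|x| ^ α * a)) +
        verticalPower α p g ξ a) := by
  have hV (x b : ℝ) : Measurable fun y ↦ verticalLeg α g x (y + b) a ^ p :=
    ((measurable_verticalLeg hg).comp (f := fun y ↦ (x, y + b, a)) (by fun_prop)).pow_const p
  have hV₀ := by simpa using hV x 0
  calc
    _ ≤ ∫⁻ y, 3 ^ (p - 1) * (verticalLeg α g x y a ^ p +
          horizontalLeg g R x (y + a) (|x| ^ α * a) ^ p +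
          verticalLeg α g ξ (y + a * chainShift α x ξ) a ^ p) := by
      gcongr with y
      exact (ENNReal.rpow_le_rpow (hF hx ha hR y) (by linarith)).trans
        (add_add_rpow_le_const_mul hp.le _ _ _)
    _ = 3 ^ (p - 1) * (verticalPower α p g x a +
          (∫⁻ y, horizontalLeg g R x (y + a) (|x| ^ α * a) ^ p) + verticalPower α p g ξ a) := by
      rw [lintegral_const_mul' _ _ (ENNReal.rpow_ne_top_of_nonneg (by linarith) (by simp)),
        lintegral_add_right _ (hV _ _), lintegral_add_left hV₀,
        lintegral_add_right_eq_self (fun y ↦ verticalLeg α g ξ y a ^ p), ← verticalPower,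
        ← verticalPower]
    _ ≤ _ := by
      gcongr
      exact lintegral_horizontalLeg_rpow_le hp hg x a _ R

lemma IsChainUpperGradient.mul_setLIntegral_rpow_le (hα : 0 ≤ α) (hp : 1 < p)
    (hg : Measurable g) {F : ℝ × ℝ → ℝ} (hF : IsChainUpperGradient α g F) {a : ℝ} (ha : 0 < a)
    (x R : ℝ) :
    ENNReal.ofReal (|x| ^ α) * ∫⁻ ξ in {ξ ∈ Metric.closedBall x R | |x| < |ξ|},
        ∫⁻ y, ‖F (x, y) - F (ξ, y + a * chainShift α x ξ)‖ₑ ^ p ≤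
      3 ^ (p - 1) * (ENNReal.ofReal (2 * R) * (ENNReal.ofReal (|x| ^ α) * verticalPower α p g x a) +
        ENNReal.ofReal (2 * R) ^ p * (ENNReal.ofReal (|x| ^ α) *
          ∫⁻ σ in Metric.closedBall x R, slicePower p g σ (|x| ^ α * a)) +
        ∫⁻ ξ in Metric.closedBall x R, ENNReal.ofReal (|ξ| ^ α) * verticalPower α p g ξ a) := by
  set w : ℝ → ℝ≥0∞ := fun x ↦ ENNReal.ofReal (|x| ^ α)
  set V : ℝ → ℝ≥0∞ := (verticalPower α p g · a)
  set H : ℝ≥0∞ := ∫⁻ σ in Metric.closedBall x R, slicePower p g σ (|x| ^ α * a)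
  set k : ℝ≥0∞ := ENNReal.ofReal (2 * R) with hk
  have hkp : k * k ^ (p - 1) = k ^ p := by
    simpa using (ENNReal.rpow_add_of_nonneg (x := k) 1 (p - 1) zero_le_one (by linarith)).symm
  have hregion : MeasurableSet {ξ ∈ Metric.closedBall x R | |x| < |ξ|} :=
    Metric.isClosed_closedBall.measurableSet.inter
      (measurableSet_lt measurable_const continuous_abs.measurable)
  calc
    _ = ∫⁻ ξ in {ξ ∈ Metric.closedBall x R | |x| < |ξ|},
          w x * ∫⁻ y, ‖F (x, y) - F (ξ, y + a * chainShift α x ξ)‖ₑ ^ p :=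
      (lintegral_const_mul' _ _ ENNReal.ofReal_ne_top).symm
    _ ≤ ∫⁻ ξ in {ξ ∈ Metric.closedBall x R | |x| < |ξ|},
          3 ^ (p - 1) * (w x * V x + k ^ (p - 1) * (w x * H) + w ξ * V ξ) := by
      refine setLIntegral_mono' hregion fun ξ ⟨hξR, hξ⟩ ↦ ?_
      calc
        _ ≤ w x * (3 ^ (p - 1) * (V x + k ^ (p - 1) * H + V ξ)) := by
          gcongr
          exact hF.lintegral_rpow_le hp hg hξ ha hξR
        _ = 3 ^ (p - 1) * (w x * V x + k ^ (p - 1) * (w x * H) + w x * V ξ) := by ring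
        _ ≤ _ := by
          gcongr
          exact ENNReal.ofReal_le_ofReal (by gcongr)
    _ ≤ ∫⁻ ξ in Metric.closedBall x R,
          3 ^ (p - 1) * (w x * V x + k ^ (p - 1) * (w x * H) + w ξ * V ξ) :=
      lintegral_mono_set fun ξ hξ ↦ hξ.1
    _ = _ := by
      rw [lintegral_const_mul' _ _ (by finiteness), lintegral_add_left measurable_const,
        setLIntegral_const, Real.volume_closedBall, ← hk, add_mul, mul_comm (_ * _) k,
        mul_comm (_ * _) k, ← mul_assoc k (k ^ (p - 1)), hkp]

lemma IsChainUpperGradient.lintegral_setLIntegral_rpow_le (hα : 0 ≤ α) (hp : 1 < p)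
    (hg : Measurable g) {F : ℝ × ℝ → ℝ} (hF : IsChainUpperGradient α g F) {a : ℝ} (ha : 0 < a)
    (R : ℝ) :
    ∫⁻ x, ENNReal.ofReal (|x| ^ α) * ∫⁻ ξ in {ξ ∈ Metric.closedBall x R | |x| < |ξ|},
        ∫⁻ y, ‖F (x, y) - F (ξ, y + a * chainShift α x ξ)‖ₑ ^ p ≤
      3 ^ (p - 1) * (2 * (ENNReal.ofReal (2 * R) *
          ∫⁻ x, ENNReal.ofReal (|x| ^ α) * verticalPower α p g x a) +
        ENNReal.ofReal (2 * R) ^ p * ∫⁻ x, ENNReal.ofReal (|x| ^ α) *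
          ∫⁻ σ in Metric.closedBall x R, slicePower p g σ (|x| ^ α * a)) := by
  set V : ℝ → ℝ≥0∞ := fun x ↦ ENNReal.ofReal (|x| ^ α) * verticalPower α p g x a
  set H : ℝ → ℝ≥0∞ := fun x ↦ ENNReal.ofReal (|x| ^ α) *
    ∫⁻ σ in Metric.closedBall x R, slicePower p g σ (|x| ^ α * a)
  set k : ℝ≥0∞ := ENNReal.ofReal (2 * R)
  have hV : Measurable V :=
    Measurable.mul (by fun_prop) ((measurable_verticalPower hg).comp measurable_prodMk_right)
  have hVball : Measurable fun x ↦ ∫⁻ ξ in Metric.closedBall x R, V ξ :=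
    measurable_setLIntegral_fiber (measurableSet_setOf_mem_closedBall measurable_fst
      measurable_const measurable_snd) (F := fun _ ξ ↦ V ξ) (hV.comp measurable_snd)
  calc
    _ ≤ ∫⁻ x, 3 ^ (p - 1) * (k * V x + k ^ p * H x + ∫⁻ ξ in Metric.closedBall x R, V ξ) :=
      lintegral_mono fun x ↦ hF.mul_setLIntegral_rpow_le hα hp hg ha x R
    _ = 3 ^ (p - 1) * (k * (∫⁻ x, V x) + k ^ p * (∫⁻ x, H x) + k * ∫⁻ x, V x) := by
      rw [lintegral_const_mul' _ _ (by finiteness), lintegral_add_right _ hVball,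
        lintegral_add_left (hV.const_mul k), lintegral_const_mul _ hV,
        lintegral_const_mul' _ _ (by finiteness), lintegral_setLIntegral_closedBall R hV]
    _ = _ := by ring

lemma lintegral_slicePower_le (hg : Measurable g) :
    ∫⁻ x, ∫⁻ z in Ioi 0, slicePower p g x z ≤ ∫⁻ q, g q ^ p := by
  calc
    _ ≤ ∫⁻ x, ∫⁻ z, ∫⁻ y, g (x, y, z) ^ p :=
      lintegral_mono fun x ↦ setLIntegral_le_lintegral _ _
    _ = ∫⁻ x, ∫⁻ r : ℝ × ℝ, g (x, r) ^ p := by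
      congr! 2 with x
      exact (lintegral_prod_symm' (fun r : ℝ × ℝ ↦ g (x, r) ^ p) (by fun_prop)).symm
    _ = _ := (lintegral_prod (fun q ↦ g q ^ p) (by fun_prop)).symm

lemma IsChainUpperGradient.rpow_mul_lintegral_rpow_le (hα : 0 ≤ α) (hp : 1 < p) (hC : 0 < C)
    (hg : Measurable g) {F : ℝ × ℝ → ℝ} (hF : IsChainUpperGradient α g F) {a : ℝ} (ha : 0 < a) :
    ENNReal.ofReal (a ^ (-p - 1)) * ∫⁻ x, ENNReal.ofReal (|x| ^ α) *
        ∫⁻ ξ in {ξ ∈ Metric.closedBall x (C * a) | |x| < |ξ|},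
          ∫⁻ y, ‖F (x, y) - F (ξ, y + a * chainShift α x ξ)‖ₑ ^ p ≤
      3 ^ (p - 1) * (2 * ENNReal.ofReal (2 * C) * (ENNReal.ofReal (a ^ (-p)) *
          ∫⁻ x, ENNReal.ofReal (|x| ^ α) * verticalPower α p g x a) +
        ENNReal.ofReal (2 * C) ^ p * (ENNReal.ofReal a⁻¹ * ∫⁻ x, ENNReal.ofReal (|x| ^ α) *
          ∫⁻ σ in Metric.closedBall x (C * a), slicePower p g σ (|x| ^ α * a))) := by
  set V := ∫⁻ x, ENNReal.ofReal (|x| ^ α) * verticalPower α p g x a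
  set H := ∫⁻ x, ENNReal.ofReal (|x| ^ α) *
    ∫⁻ σ in Metric.closedBall x (C * a), slicePower p g σ (|x| ^ α * a)
  set w := ENNReal.ofReal (a ^ (-p - 1))
  set ℓ := ENNReal.ofReal (2 * (C * a))
  have hV : w * ℓ = ENNReal.ofReal (2 * C) * ENNReal.ofReal (a ^ (-p)) := by
    rw [← ENNReal.ofReal_mul (by positivity), ← ENNReal.ofReal_mul (by positivity),
      Real.rpow_sub_one ha.ne']
    congr 1
    field_simp
  have hH : w * ℓ ^ p = ENNReal.ofReal (2 * C) ^ p * ENNReal.ofReal a⁻¹ := by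
    simp only [w, ℓ]
    rw [← mul_assoc 2, ENNReal.ofReal_mul (by positivity : 0 ≤ 2 * C),
      ENNReal.mul_rpow_of_nonneg _ _ (by linarith), ENNReal.ofReal_rpow_of_pos ha, mul_left_comm,
      ← ENNReal.ofReal_mul (by positivity), ← Real.rpow_add ha, show -p - 1 + p = -1 by ring,
      Real.rpow_neg_one]
  calc
    _ ≤ w * (3 ^ (p - 1) * (2 * (ℓ * V) + ℓ ^ p * H)) := by
      gcongr
      exact hF.lintegral_setLIntegral_rpow_le hα hp hg ha (C * a)
    _ = 3 ^ (p - 1) * (2 * (w * ℓ) * V + w * ℓ ^ p * H) := by ring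
    _ = _ := by rw [hV, hH]; ring

theorem exists_chainEnergy_le (hα : 0 < α) (hp : 1 < p) (hC : 0 < C) :
    ∃ K : ℝ≥0∞, K ≠ ∞ ∧ ∀ g : ℝ × ℝ × ℝ → ℝ≥0∞, Measurable g → ∀ F : ℝ × ℝ → ℝ,
      IsChainUpperGradient α g F → chainEnergy α p C F ≤ K * ∫⁻ q, g q ^ p := by
  set k : ℝ≥0∞ := ENNReal.ofReal (2 * C)
  set Kv : ℝ≥0∞ := ENNReal.ofReal (2 ^ (p - 1) * (2 / (p - 1)))
  set Kh : ℝ≥0∞ := ENNReal.ofReal ((4 + 2 * 3 ^ α) * C)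
  refine ⟨3 ^ (p - 1) * (2 * (k * Kv) + k ^ p * Kh), by finiteness, fun g hg F hF ↦ ?_⟩
  set V : ℝ → ℝ≥0∞ := fun a ↦ ∫⁻ x, ENNReal.ofReal (|x| ^ α) * verticalPower α p g x a
  set H : ℝ → ℝ≥0∞ := fun a ↦ ∫⁻ x, ENNReal.ofReal (|x| ^ α) *
    ∫⁻ σ in Metric.closedBall x (C * a), slicePower p g σ (|x| ^ α * a)
  have hV : Measurable fun a ↦ ENNReal.ofReal (a ^ (-p)) * V a := by
    have : Measurable fun q : ℝ × ℝ ↦ verticalPower α p g q.2 q.1 :=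
      (measurable_verticalPower hg).comp measurable_swap
    fun_prop
  calc
    chainEnergy α p C F ≤ ∫⁻ a in Ioi 0, 3 ^ (p - 1) *
          (2 * k * (ENNReal.ofReal (a ^ (-p)) * V a) + k ^ p * (ENNReal.ofReal a⁻¹ * H a)) :=
      setLIntegral_mono' measurableSet_Ioi fun _ ha ↦
        hF.rpow_mul_lintegral_rpow_le hα.le hp hC hg ha
    _ = 3 ^ (p - 1) * (2 * k * (∫⁻ a in Ioi 0, ENNReal.ofReal (a ^ (-p)) * V a) +
          k ^ p * ∫⁻ a in Ioi 0, ENNReal.ofReal a⁻¹ * H a) := by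
      rw [lintegral_const_mul' _ _ (by finiteness), lintegral_add_left (hV.const_mul _),
        lintegral_const_mul' _ _ (by finiteness), lintegral_const_mul' _ _ (by finiteness)]
    _ ≤ 3 ^ (p - 1) * (2 * k * (Kv * ∫⁻ q, g q ^ p) + k ^ p * (Kh * ∫⁻ q, g q ^ p)) := by
      gcongr
      · exact (lintegral_setLIntegral_verticalPower_le hp hg).trans
          (by grw [lintegral_slicePower_le hg])
      · exact (lintegral_setLIntegral_slicePower_le hα hC hg).trans
          (by grw [lintegral_slicePower_le hg])
    _ = _ := by ring

end ChainEstimate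

section Averaging

/-- The points `w` reached from `u` by a chain that moves the abscissa by at most `4 * d` and has a
duration `a ∈ [d / (6 * α), 10 * d]`, where `w.2 = u.2 + a * chainShift α u.1 w.1`. -/
def bridge (α : ℝ) (u : ℝ × ℝ) (d : ℝ) : Set (ℝ × ℝ) :=
  {w | |u.1| < |w.1| ∧ |w.1 - u.1| ≤ 4 * d ∧
    w.2 - u.2 ∈ Icc (d / (6 * α) * chainShift α u.1 w.1) (10 * d * chainShift α u.1 w.1)}

/-- The lower bound `δ ^ (p + 2) * m ^ (α - 1)` for the denominator of the Besov seminorm,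
inverted. -/
noncomputable def besovKernel (α p : ℝ) (u v : ℝ × ℝ) : ℝ :=
  (quasiDist u v ^ (p + 2) * pairScale u v ^ (α - 1))⁻¹

/-- The area, up to a constant, of the set of points joined to both `u` and `v` by chains whose
durations are comparable with `quasiDist u v`. -/
noncomputable def bridgeArea (u v : ℝ × ℝ) : ℝ :=
  quasiDist u v ^ 3 / pairScale u v

/-- The energy of the oscillation of `F` between `u` and the points that chains of a duration
comparable with `quasiDist u v` reach from `u`. -/
noncomputable def bridgeEnergy (α p : ℝ) (F : ℝ × ℝ → ℝ) (u v : ℝ × ℝ) : ℝ≥0∞ :=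
  ∫⁻ w in bridge α u (quasiDist u v), ‖F u - F w‖ₑ ^ p

/-- The total weight with which a point `w` enters the average over `v` of the bridge energies
`bridgeEnergy α p F u v`. -/
noncomputable def bridgeWeight (α p : ℝ) (u w : ℝ × ℝ) : ℝ≥0∞ :=
  ∫⁻ v in {v | w ∈ bridge α u (quasiDist u v)},
    ENNReal.ofReal (besovKernel α p u v / bridgeArea u v) ∂planeMeasure α

variable {α p : ℝ} {F : ℝ × ℝ → ℝ}

instance (α : ℝ) : SFinite (planeMeasure α) := by
  unfold planeMeasure; infer_instance

lemma besovKernel_comm (α p : ℝ) (u v : ℝ × ℝ) : besovKernel α p u v = besovKernel α p v u := by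
  rw [besovKernel, besovKernel, quasiDist_comm, pairScale_comm]

lemma bridgeArea_comm (u v : ℝ × ℝ) : bridgeArea u v = bridgeArea v u := by
  rw [bridgeArea, bridgeArea, quasiDist_comm, pairScale_comm]

section Measurability

variable {X : Type*} [MeasurableSpace X] {g h : X → ℝ × ℝ}

@[fun_prop]
lemma measurable_besovKernel (hg : Measurable g) (hh : Measurable h) :
    Measurable fun t ↦ besovKernel α p (g t) (h t) := by
  unfold besovKernel; fun_prop

@[fun_prop]
lemma measurable_bridgeArea (hg : Measurable g) (hh : Measurable h) :
    Measurable fun t ↦ bridgeArea (g t) (h t) := by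
  unfold bridgeArea; fun_prop

lemma measurableSet_setOf_mem_bridge {u w : X → ℝ × ℝ} {d : X → ℝ}
    (hu : Measurable u) (hw : Measurable w) (hd : Measurable d) :
    MeasurableSet {t | w t ∈ bridge α (u t) (d t)} := by
  have hy : Measurable fun t ↦ (w t).2 - (u t).2 := by fun_prop
  exact (measurableSet_lt hu.fst.abs hw.fst.abs).inter
    ((measurableSet_le (hw.fst.sub hu.fst).abs (hd.const_mul 4)).inter
      ((measurableSet_le (by fun_prop) hy).inter (measurableSet_le hy (by fun_prop))))

@[fun_prop]
lemma measurable_bridgeEnergy (hF : Measurable F) (hg : Measurable g) (hh : Measurable h) :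
    Measurable fun t ↦ bridgeEnergy α p F (g t) (h t) :=
  measurable_setLIntegral_fiber (F := fun t w ↦ ‖F (g t) - F w‖ₑ ^ p)
    (r := {q : X × (ℝ × ℝ) | q.2 ∈ bridge α (g q.1) (quasiDist (g q.1) (h q.1))})
    (measurableSet_setOf_mem_bridge (by fun_prop) (by fun_prop) (by fun_prop)) (by fun_prop)

@[fun_prop]
lemma measurable_bridgeWeight (hg : Measurable g) (hh : Measurable h) :
    Measurable fun t ↦ bridgeWeight α p (g t) (h t) :=
  measurable_setLIntegral_fiber
    (F := fun t v ↦ ENNReal.ofReal (besovKernel α p (g t) v / bridgeArea (g t) v))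
    (r := {q : X × (ℝ × ℝ) | h q.1 ∈ bridge α (g q.1) (quasiDist (g q.1) q.2)})
    (measurableSet_setOf_mem_bridge (by fun_prop) (by fun_prop) (by fun_prop)) (by fun_prop)

end Measurability

lemma mem_bridge (hα : 1 ≤ α) {x y ξ η d m M : ℝ} (hd : 0 < d) (hxM : |x| ≤ M) (hMx : M ≤ |x| + d)
    (hMm : M + d ≤ m) (hmM : m ≤ 2 * M + d) (hξ : |ξ| ∈ Ioo (M + d) (M + 2 * d))
    (hξx : |ξ - x| ≤ 4 * d) (hη : η - y ∈ Icc (d ^ 2 / m) (5 * (d ^ 2 / m))) :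
    (ξ, η) ∈ bridge α (x, y) d := by
  have hx : |x| < |ξ| := by linarith [hξ.1]
  have hm : 0 < m := by linarith [abs_nonneg x]
  have hκ : 0 < chainShift α x ξ := chainShift_pos hα hx
  have hκ_lower : d ≤ 2 * (chainShift α x ξ * m) := by
    nlinarith [abs_sub_abs_le_chainShift_mul hα hx, hξ.1, hξ.2]
  have hκ_upper : chainShift α x ξ * m ≤ 6 * α * d := by
    nlinarith [chainShift_mul_le hα hx, hξ.1, hξ.2]
  refine ⟨hx, hξx, le_trans ?_ hη.1, hη.2.trans ?_⟩
  · rw [le_div_iff₀ hm]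
    calc d / (6 * α) * chainShift α x ξ * m = d / (6 * α) * (chainShift α x ξ * m) := by ring
      _ ≤ d / (6 * α) * (6 * α * d) := by gcongr
      _ = d ^ 2 := by field_simp
  · rw [← mul_div_assoc, div_le_iff₀ hm]
    calc 5 * d ^ 2 = 5 * d * d := by ring
      _ ≤ 5 * d * (2 * (chainShift α x ξ * m)) := by gcongr
      _ = 10 * d * chainShift α x ξ * m := by ring

lemma abs_sub_le_of_mul_add_nonneg {x x' ξ d M : ℝ} (hxM : |x| ≤ M) (hx'M : |x'| ≤ M)
    (hMx : M ≤ |x| + d) (hMx' : M ≤ |x'| + d) (hxx' : |x - x'| ≤ d)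
    (hξ : |ξ| ∈ Ioo (M + d) (M + 2 * d)) (hsign : 0 ≤ ξ * (x + x')) :
    |ξ - x| ≤ 4 * d := by
  have same_sign {t : ℝ} (ht : 0 ≤ ξ * t) (htM : |t| ≤ M) (hMt : M ≤ |t| + d) :
      |ξ - t| ≤ 3 * d := by
    rw [abs_sub_eq_abs_abs_sub_abs ht, abs_of_nonneg] <;> linarith [hξ.1, hξ.2, abs_nonneg (x - x')]
  have hd : 0 ≤ d := (abs_nonneg _).trans hxx'
  rcases le_or_gt 0 (ξ * x) with hx | hx
  · linarith [same_sign hx hxM hMx]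
  · have := same_sign (t := x') (by linarith) hx'M hMx'
    rw [abs_sub_comm] at hxx'
    linarith [abs_sub_le ξ x' x]

lemma mem_bridge_quasiDist (hα : 1 ≤ α) {u v w : ℝ × ℝ} (huv : u ≠ v)
    (hξ : |w.1| ∈ Ioo (max |u.1| |v.1| + quasiDist u v) (max |u.1| |v.1| + 2 * quasiDist u v))
    (hsign : 0 ≤ w.1 * (u.1 + v.1))
    (hη : w.2 ∈ Icc (max u.2 v.2 + quasiDist u v ^ 2 / pairScale u v)
      (max u.2 v.2 + 2 * (quasiDist u v ^ 2 / pairScale u v))) :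
    w ∈ bridge α u (quasiDist u v) := by
  have hfst := abs_fst_sub_le_quasiDist u v
  have hsnd := pairScale_mul_abs_snd_sub_le u v
  have hm_eq : pairScale u v = |u.1| + |v.1| + quasiDist u v := rfl
  have hd : 0 < quasiDist u v := quasiDist_pos huv
  set d := quasiDist u v
  set m := pairScale u v
  set M := max |u.1| |v.1|
  have hm : 0 < m := by rw [hm_eq]; positivity
  have huM : |u.1| ≤ M := le_max_left _ _
  have hvM : |v.1| ≤ M := le_max_right _ _
  have hMm : M + d ≤ m := by
    linarith [max_le_add_of_nonneg (abs_nonneg u.1) (abs_nonneg v.1)]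
  have hfst' := abs_le.1 ((abs_abs_sub_abs_le u.1 v.1).trans hfst)
  have hMu : M ≤ |u.1| + d := max_le (by linarith) (by linarith)
  have hMv : M ≤ |v.1| + d := max_le (by linarith) (by linarith)
  have hheight : |u.2 - v.2| ≤ 3 * (d ^ 2 / m) := by
    rw [← mul_div_assoc, le_div_iff₀ hm]; linarith
  have huN : max u.2 v.2 ≤ u.2 + 3 * (d ^ 2 / m) :=
    max_le (by linarith [abs_nonneg (u.2 - v.2)]) (by linarith [neg_abs_le (u.2 - v.2)])
  refine mem_bridge hα hd huM hMu hMm (by linarith) hξ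
    (abs_sub_le_of_mul_add_nonneg huM hvM hMu hMv hfst hξ hsign) ⟨?_, ?_⟩
  · linarith [hη.1, le_max_left u.2 v.2]
  · linarith [hη.2]

lemma exists_subset_bridge_inter_bridge (hα : 1 ≤ α) {u v : ℝ × ℝ} (huv : u ≠ v) :
    ∃ S, MeasurableSet S ∧ volume S = ENNReal.ofReal (bridgeArea u v) ∧
      S ⊆ bridge α u (quasiDist u v) ∩ bridge α v (quasiDist u v) := by
  have hd := quasiDist_nonneg u v
  obtain ⟨A, hA, hvolA, hmemA⟩ := exists_measurableSet_abs_mem_Ioo (u.1 + v.1)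
    (by positivity : 0 ≤ max |u.1| |v.1| + quasiDist u v) (max |u.1| |v.1| + 2 * quasiDist u v)
  set h := quasiDist u v ^ 2 / pairScale u v with hh
  refine ⟨A ×ˢ Icc (max u.2 v.2 + h) (max u.2 v.2 + 2 * h), hA.prod measurableSet_Icc, ?_,
    fun w ⟨hξ, hη⟩ ↦ ⟨?_, ?_⟩⟩
  · rw [Measure.volume_eq_prod, Measure.prod_prod, hvolA, Real.volume_Icc,
      ← ENNReal.ofReal_mul (by linarith), bridgeArea, hh]
    congr 1
    ring
  · exact mem_bridge_quasiDist hα huv (hmemA _ hξ).1 (hmemA _ hξ).2 hη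
  · rw [quasiDist_comm, max_comm, add_comm u.1] at hmemA
    rw [hh, quasiDist_comm, pairScale_comm, max_comm] at hη
    rw [quasiDist_comm]
    exact mem_bridge_quasiDist hα huv.symm (hmemA _ hξ).1 (hmemA _ hξ).2 hη

lemma enorm_sub_rpow_le (hp : 1 ≤ p) (a b c : ℝ) :
    ‖a - b‖ₑ ^ p ≤ 2 ^ (p - 1) * (‖a - c‖ₑ ^ p + ‖b - c‖ₑ ^ p) :=
  calc
    ‖a - b‖ₑ ^ p = ‖(a - c) - (b - c)‖ₑ ^ p := by rw [sub_sub_sub_cancel_right]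
    _ ≤ (‖a - c‖ₑ + ‖b - c‖ₑ) ^ p := by gcongr; exact enorm_sub_le
    _ ≤ _ := ENNReal.rpow_add_le_mul_rpow_add_rpow _ _ hp

lemma ofReal_bridgeArea_mul_le (hα : 1 ≤ α) (hp : 1 ≤ p) (hF : Measurable F) {u v : ℝ × ℝ}
    (huv : u ≠ v) :
    ENNReal.ofReal (bridgeArea u v) * ‖F u - F v‖ₑ ^ p ≤
      2 ^ (p - 1) * (bridgeEnergy α p F u v + bridgeEnergy α p F v u) := by
  obtain ⟨S, -, hvol, hS⟩ := exists_subset_bridge_inter_bridge hα huv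
  calc
    _ = ∫⁻ _ in S, ‖F u - F v‖ₑ ^ p := by rw [setLIntegral_const, hvol, mul_comm]
    _ ≤ ∫⁻ w in S, 2 ^ (p - 1) * (‖F u - F w‖ₑ ^ p + ‖F v - F w‖ₑ ^ p) := by
      gcongr with w; exact enorm_sub_rpow_le hp _ _ _
    _ = 2 ^ (p - 1) * ((∫⁻ w in S, ‖F u - F w‖ₑ ^ p) + ∫⁻ w in S, ‖F v - F w‖ₑ ^ p) := by
      rw [lintegral_const_mul' _ _ (by finiteness), lintegral_add_left (by fun_prop)]
    _ ≤ _ := by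
      rw [bridgeEnergy, bridgeEnergy, quasiDist_comm v u]
      gcongr
      · exact fun w hw ↦ (hS hw).1
      · exact fun w hw ↦ (hS hw).2

lemma bounds_of_mem_bridge (hα : 1 ≤ α) {x y ξ a d : ℝ}
    (h : (ξ, y + a * chainShift α x ξ) ∈ bridge α (x, y) d) :
    0 < d ∧ d ≤ 6 * α * a ∧ a ≤ 10 * d ∧ |ξ - x| ≤ 4 * d := by
  obtain ⟨hx, hξx, hη⟩ := h
  have hκ : 0 < chainShift α x ξ := chainShift_pos hα hx
  simp only [add_sub_cancel_left, mem_Icc, mul_le_mul_iff_left₀ hκ] at hη hξx hx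
  refine ⟨?_, ?_, hη.2, hξx⟩
  · linarith [abs_sub_abs_le_abs_sub ξ x]
  · rw [div_le_iff₀ (by linarith)] at hη; linarith [hη.1]

lemma abs_fst_rpow_mul_besovKernel_div_le (hα : 0 ≤ α) {u v : ℝ × ℝ} (h : 0 < quasiDist u v) :
    |v.1| ^ α * (besovKernel α p u v / bridgeArea u v) ≤
      pairScale u v ^ 2 / quasiDist u v ^ (p + 5) := by
  unfold besovKernel bridgeArea
  have hm_eq : pairScale u v = |u.1| + |v.1| + quasiDist u v := rfl
  set d := quasiDist u v
  set m := pairScale u v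
  have hm : 0 < m := by rw [hm_eq]; positivity
  have hvm : |v.1| ≤ m := by linarith [abs_nonneg u.1]
  have hd : d ^ (p + 5) = d ^ (p + 2) * d ^ 3 := by
    rw [← Real.rpow_add_natCast h.ne']; congr 1; push_cast; ring
  calc
    _ ≤ m ^ α * ((d ^ (p + 2) * m ^ (α - 1))⁻¹ / (d ^ 3 / m)) := by gcongr
    _ = m ^ 2 / d ^ (p + 5) := by rw [hd, Real.rpow_sub_one hm.ne']; field_simp

lemma setLIntegral_planeMeasure_le {S : Set (ℝ × ℝ)} (hS : MeasurableSet S)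
    {N : ℝ × ℝ → ℝ} {c : ℝ} (h : ∀ v ∈ S, |v.1| ^ α * N v ≤ c) :
    ∫⁻ v in S, ENNReal.ofReal (N v) ∂planeMeasure α ≤ ENNReal.ofReal c * volume S := by
  have hw : Measurable fun v : ℝ × ℝ ↦ ENNReal.ofReal (|v.1| ^ α) := by fun_prop
  rw [planeMeasure, restrict_withDensity hS, ← setLIntegral_const]
  refine (lintegral_withDensity_le_lintegral_mul _ hw _).trans (setLIntegral_mono' hS fun v hv ↦ ?_)
  rw [Pi.mul_apply, ← ENNReal.ofReal_mul (by positivity)]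
  exact ENNReal.ofReal_le_ofReal (h v hv)

lemma setOf_mem_bridge_subset (hα : 1 ≤ α) {x y ξ a : ℝ} (ha : 0 < a) :
    {v | (ξ, y + a * chainShift α x ξ) ∈ bridge α (x, y) (quasiDist (x, y) v)} ⊆
      Metric.closedBall x (6 * α * a) ×ˢ
        Metric.closedBall y (1080 * α ^ 2 * a ^ 2 / (|x| + a)) := by
  intro v hv
  obtain ⟨-, hda, had, -⟩ := bounds_of_mem_bridge hα hv
  have hfst := abs_fst_sub_le_quasiDist (x, y) v
  have hsnd := pairScale_mul_abs_snd_sub_le (x, y) v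
  have hm_eq : pairScale (x, y) v = |x| + |v.1| + quasiDist (x, y) v := rfl
  rw [mem_prod, Metric.mem_closedBall', Metric.mem_closedBall', Real.dist_eq, Real.dist_eq]
  refine ⟨hfst.trans hda, ?_⟩
  rw [le_div_iff₀ (by positivity)]
  calc |y - v.2| * (|x| + a) ≤ |y - v.2| * (10 * pairScale (x, y) v) := by
        gcongr; linarith [abs_nonneg x, abs_nonneg v.1]
    _ ≤ 10 * (3 * quasiDist (x, y) v ^ 2) := by linarith
    _ ≤ 10 * (3 * (6 * α * a) ^ 2) := by gcongr; exact quasiDist_nonneg _ _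
    _ = 1080 * α ^ 2 * a ^ 2 := by ring

lemma abs_fst_rpow_mul_besovKernel_div_le_of_mem_bridge (hα : 1 ≤ α) (hp : 0 ≤ p) {x y ξ a : ℝ}
    (ha : 0 < a) {v : ℝ × ℝ}
    (hv : (ξ, y + a * chainShift α x ξ) ∈ bridge α (x, y) (quasiDist (x, y) v)) :
    |v.1| ^ α * (besovKernel α p (x, y) v / bridgeArea (x, y) v) ≤
      (12 * α * (|x| + a)) ^ 2 / (a / 10) ^ (p + 5) := by
  obtain ⟨hd, hda, had, -⟩ := bounds_of_mem_bridge hα hv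
  refine (abs_fst_rpow_mul_besovKernel_div_le (by linarith) hd).trans ?_
  have hm := pairScale_le (x, y) v
  gcongr
  · exact pairScale_nonneg _ _
  · nlinarith [abs_nonneg x]
  · linarith

lemma chainShift_mul_abs_add_le (hα : 1 ≤ α) {x ξ a C : ℝ} (ha : 0 ≤ a) (hx : |x| < |ξ|)
    (hξ : |ξ - x| ≤ C * a) : chainShift α x ξ * (|x| + a) ≤ (α * C + 1) * a := by
  have hκ := chainShift_pos hα hx
  calc chainShift α x ξ * (|x| + a) = chainShift α x ξ * |x| + chainShift α x ξ * a := by ring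
    _ ≤ chainShift α x ξ * |ξ| + 1 * a := by gcongr; exact chainShift_le_one α x ξ
    _ ≤ α * (|ξ| - |x|) + 1 * a := by grw [chainShift_mul_le hα hx]
    _ ≤ α * (C * a) + 1 * a := by grw [abs_sub_abs_le_abs_sub ξ x, hξ]
    _ = (α * C + 1) * a := by ring

lemma exists_bridgeWeight_le (hα : 1 ≤ α) (hp : 0 ≤ p) :
    ∃ K : ℝ, 0 ≤ K ∧ ∀ x y ξ a : ℝ, |x| < |ξ| → 0 < a → |ξ - x| ≤ 24 * α * a →
      ENNReal.ofReal (chainShift α x ξ) * bridgeWeight α p (x, y) (ξ, y + a * chainShift α x ξ) ≤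
        ENNReal.ofReal (K * a ^ (-p - 1)) := by
  refine ⟨(α * (24 * α) + 1) * (12 * α) ^ 2 * 10 ^ (p + 5) * (2 * (6 * α)) * (2 * 1080 * α ^ 2),
    by positivity, fun x y ξ a hx ha hξ ↦ ?_⟩
  have hκ := chainShift_pos hα hx
  have hκR := chainShift_mul_abs_add_le hα ha.le hx hξ
  have hpow : a ^ (-p - 1) = a ^ 4 / a ^ (p + 5) := by
    rw [← Real.rpow_natCast, ← Real.rpow_sub ha]; congr 1; push_cast; ring
  set κ := chainShift α x ξ
  set R := |x| + a
  have hR : 0 < R := by positivity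
  calc
    _ ≤ ENNReal.ofReal κ * (ENNReal.ofReal ((12 * α * R) ^ 2 / (a / 10) ^ (p + 5)) *
        volume (Metric.closedBall x (6 * α * a) ×ˢ
          Metric.closedBall y (1080 * α ^ 2 * a ^ 2 / R))) := by
      gcongr
      refine (setLIntegral_planeMeasure_le
        (measurableSet_setOf_mem_bridge measurable_const measurable_const (by fun_prop))
        fun v hv ↦ abs_fst_rpow_mul_besovKernel_div_le_of_mem_bridge hα hp ha hv).trans ?_
      gcongr
      exact setOf_mem_bridge_subset hα ha
    _ = ENNReal.ofReal (κ * R * ((12 * α) ^ 2 * 10 ^ (p + 5) * (2 * (6 * α)) * (2 * 1080 * α ^ 2) *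
        (a ^ 3 / a ^ (p + 5)))) := by
      rw [Measure.volume_eq_prod, Measure.prod_prod, Real.volume_closedBall,
        Real.volume_closedBall, ← ENNReal.ofReal_mul (by positivity),
        ← ENNReal.ofReal_mul (by positivity), ← ENNReal.ofReal_mul (by positivity),
        Real.div_rpow ha.le (by norm_num)]
      congr 1
      field_simp
    _ ≤ ENNReal.ofReal ((α * (24 * α) + 1) * a * ((12 * α) ^ 2 * 10 ^ (p + 5) * (2 * (6 * α)) *
        (2 * 1080 * α ^ 2) * (a ^ 3 / a ^ (p + 5)))) := by
      gcongr
    _ = _ := by rw [hpow]; ring_nf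

lemma lintegral_besovKernel_mul_bridgeEnergy (hF : Measurable F) (u : ℝ × ℝ) :
    ∫⁻ v, ENNReal.ofReal (besovKernel α p u v / bridgeArea u v) * bridgeEnergy α p F u v
        ∂planeMeasure α =
      ∫⁻ w, bridgeWeight α p u w * ‖F u - F w‖ₑ ^ p := by
  have hr : MeasurableSet {q : (ℝ × ℝ) × (ℝ × ℝ) | q.2 ∈ bridge α u (quasiDist u q.1)} :=
    measurableSet_setOf_mem_bridge measurable_const measurable_snd (by fun_prop)
  have hN : Measurable fun v ↦ ENNReal.ofReal (besovKernel α p u v / bridgeArea u v) := by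
    fun_prop
  simp_rw [bridgeEnergy, bridgeWeight, ← lintegral_mul_const _ hN,
    ← lintegral_const_mul' _ _ ENNReal.ofReal_ne_top]
  exact setLIntegral_fiber_swap hr (by fun_prop)

lemma abs_lt_of_bridgeWeight_ne_zero {u w : ℝ × ℝ} (h : bridgeWeight α p u w ≠ 0) :
    |u.1| < |w.1| := by
  by_contra hw
  exact h (by simp [bridgeWeight, bridge, hw])

lemma bounds_of_bridgeWeight_ne_zero (hα : 1 ≤ α) {x y ξ a : ℝ}
    (h : bridgeWeight α p (x, y) (ξ, y + a * chainShift α x ξ) ≠ 0) :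
    0 < a ∧ |ξ - x| ≤ 24 * α * a := by
  obtain ⟨v, hv⟩ : {v | (ξ, y + a * chainShift α x ξ) ∈
      bridge α (x, y) (quasiDist (x, y) v)}.Nonempty := by
    contrapose! h
    rw [bridgeWeight, h, setLIntegral_empty]
  obtain ⟨hd, hda, -, hξ⟩ := bounds_of_mem_bridge hα hv
  exact ⟨pos_of_mul_pos_right (hd.trans_le hda) (by positivity), by linarith⟩

lemma lintegral_eq_lintegral_lintegral_chain (hα : 1 ≤ α) (x y : ℝ) {h : ℝ × ℝ → ℝ≥0∞}
    (hh : Measurable h) (hsupp : ∀ w, h w ≠ 0 → |x| < |w.1|) :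
    ∫⁻ w, h w = ∫⁻ a, ∫⁻ ξ in {ξ | |x| < |ξ|},
      ENNReal.ofReal (chainShift α x ξ) * h (ξ, y + a * chainShift α x ξ) := by
  have hS : MeasurableSet {ξ : ℝ | |x| < |ξ|} := measurableSet_lt (by fun_prop) (by fun_prop)
  calc
    ∫⁻ w, h w = ∫⁻ ξ, ∫⁻ η, h (ξ, η) := lintegral_prod _ hh.aemeasurable
    _ = ∫⁻ ξ in {ξ | |x| < |ξ|}, ∫⁻ η, h (ξ, η) := by
      refine (setLIntegral_eq_of_support_subset fun ξ hξ ↦ ?_).symm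
      contrapose! hξ
      simp_rw [Function.notMem_support, fun η ↦ not_not.1 (mt (hsupp (ξ, η)) hξ), lintegral_zero]
    _ = ∫⁻ ξ in {ξ | |x| < |ξ|}, ∫⁻ a,
          ENNReal.ofReal (chainShift α x ξ) * h (ξ, y + a * chainShift α x ξ) := by
      refine setLIntegral_congr_fun hS fun ξ hξ ↦ ?_
      rw [lintegral_eq_mul_lintegral_add_mul (chainShift_pos hα hξ) y (by fun_prop)]
      exact (lintegral_const_mul' _ _ ENNReal.ofReal_ne_top).symm
    _ = _ := lintegral_lintegral_swap (by fun_prop)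

lemma exists_lintegral_besovKernel_mul_bridgeEnergy_le (hα : 1 ≤ α) (hp : 0 ≤ p) :
    ∃ K : ℝ, 0 ≤ K ∧ ∀ F : ℝ × ℝ → ℝ, Measurable F → ∀ x y : ℝ,
      ∫⁻ v, ENNReal.ofReal (besovKernel α p (x, y) v / bridgeArea (x, y) v) *
          bridgeEnergy α p F (x, y) v ∂planeMeasure α ≤
        ENNReal.ofReal K * ∫⁻ a in Ioi 0, ENNReal.ofReal (a ^ (-p - 1)) *
          ∫⁻ ξ in {ξ ∈ Metric.closedBall x (24 * α * a) | |x| < |ξ|},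
            ‖F (x, y) - F (ξ, y + a * chainShift α x ξ)‖ₑ ^ p := by
  obtain ⟨K, hK, hweight⟩ := exists_bridgeWeight_le hα hp
  refine ⟨K, hK, fun F hF x y ↦ ?_⟩
  have hS : MeasurableSet {ξ : ℝ | |x| < |ξ|} := measurableSet_lt (by fun_prop) (by fun_prop)
  rw [lintegral_besovKernel_mul_bridgeEnergy hF,
    lintegral_eq_lintegral_lintegral_chain hα x y (by fun_prop)
      fun w hw ↦ abs_lt_of_bridgeWeight_ne_zero (left_ne_zero_of_mul hw),
    ← lintegral_const_mul' _ _ ENNReal.ofReal_ne_top, ← setLIntegral_univ]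
  refine setLIntegral_le_setLIntegral_of_ne_zero .univ measurableSet_Ioi fun a _ ha ↦ ?_
  have bounds {ξ : ℝ} (hξ : ENNReal.ofReal (chainShift α x ξ) *
      (bridgeWeight α p (x, y) (ξ, y + a * chainShift α x ξ) *
        ‖F (x, y) - F (ξ, y + a * chainShift α x ξ)‖ₑ ^ p) ≠ 0) :
      0 < a ∧ |ξ - x| ≤ 24 * α * a :=
    bounds_of_bridgeWeight_ne_zero hα (left_ne_zero_of_mul (right_ne_zero_of_mul hξ))
  have ha₀ : 0 < a := by
    contrapose! ha
    simp_rw [fun ξ ↦ not_not.1 (mt (bounds (ξ := ξ)) fun h ↦ ha.not_gt h.1), lintegral_zero]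
  refine ⟨ha₀, ?_⟩
  rw [← mul_assoc, ← ENNReal.ofReal_mul hK, ← lintegral_const_mul' _ _ ENNReal.ofReal_ne_top]
  refine setLIntegral_le_setLIntegral_of_ne_zero hS
    (Metric.isClosed_closedBall.measurableSet.inter hS) fun ξ hξ h ↦ ⟨⟨(bounds h).2, hξ⟩, ?_⟩
  rw [← mul_assoc]
  gcongr
  exact hweight x y ξ a hξ ha₀ (bounds h).2

lemma lintegral_planeMeasure (α : ℝ) {G : ℝ × ℝ → ℝ≥0∞} (hG : Measurable G) :
    ∫⁻ u, G u ∂planeMeasure α = ∫⁻ x, ENNReal.ofReal (|x| ^ α) * ∫⁻ y, G (x, y) := by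
  rw [planeMeasure, lintegral_withDensity_eq_lintegral_mul _ (by fun_prop) hG,
    Measure.volume_eq_prod, lintegral_prod _ (by fun_prop)]
  simp_rw [Pi.mul_apply, lintegral_const_mul' _ _ ENNReal.ofReal_ne_top]

lemma lintegral_planeMeasure_chain_eq_chainEnergy (C : ℝ) (hF : Measurable F) :
    ∫⁻ u, (∫⁻ a in Ioi 0, ENNReal.ofReal (a ^ (-p - 1)) *
        ∫⁻ ξ in {ξ ∈ Metric.closedBall u.1 (C * a) | |u.1| < |ξ|},
          ‖F u - F (ξ, u.2 + a * chainShift α u.1 ξ)‖ₑ ^ p) ∂planeMeasure α =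
      chainEnergy α p C F := by
  have hchain : Measurable fun q : (ℝ × ℝ) × ℝ ↦
      ∫⁻ ξ in {ξ ∈ Metric.closedBall q.1.1 (C * q.2) | |q.1.1| < |ξ|},
        ‖F q.1 - F (ξ, q.1.2 + q.2 * chainShift α q.1.1 ξ)‖ₑ ^ p :=
    measurable_setLIntegral_fiber
      (F := fun q ξ ↦ ‖F q.1 - F (ξ, q.1.2 + q.2 * chainShift α q.1.1 ξ)‖ₑ ^ p)
      (r := {q : ((ℝ × ℝ) × ℝ) × ℝ |
        q.2 ∈ {ξ ∈ Metric.closedBall q.1.1.1 (C * q.1.2) | |q.1.1.1| < |ξ|}})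
      ((measurableSet_setOf_mem_closedBall (by fun_prop) (by fun_prop) (by fun_prop)).inter
        (measurableSet_lt measurable_fst.fst.fst.abs measurable_snd.abs)) (by fun_prop)
  rw [lintegral_lintegral_swap (by fun_prop), chainEnergy]
  refine lintegral_congr fun a ↦ ?_
  rw [lintegral_const_mul' _ _ ENNReal.ofReal_ne_top]
  congr 1
  refine (lintegral_planeMeasure α (hchain.comp (measurable_id.prodMk measurable_const))).trans
    (lintegral_congr fun x ↦ ?_)
  dsimp only [Function.comp_apply, id_eq]
  rw [lintegral_lintegral_swap (by fun_prop)]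

lemma exists_lintegral_lintegral_besovKernel_mul_bridgeEnergy_le (hα : 1 ≤ α) (hp : 0 ≤ p) :
    ∃ K : ℝ, ∀ F : ℝ × ℝ → ℝ, Measurable F →
      ∫⁻ u, ∫⁻ v, ENNReal.ofReal (besovKernel α p u v / bridgeArea u v) * bridgeEnergy α p F u v
        ∂planeMeasure α ∂planeMeasure α ≤ ENNReal.ofReal K * chainEnergy α p (24 * α) F := by
  obtain ⟨K, -, hK⟩ := exists_lintegral_besovKernel_mul_bridgeEnergy_le hα hp
  refine ⟨K, fun F hF ↦ ?_⟩
  rw [← lintegral_planeMeasure_chain_eq_chainEnergy _ hF,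
    ← lintegral_const_mul' _ _ ENNReal.ofReal_ne_top]
  exact lintegral_mono fun ⟨x, y⟩ ↦ hK F hF x y

lemma ofReal_besovKernel_mul_le (hα : 1 ≤ α) (hp : 1 ≤ p) (hF : Measurable F) (u v : ℝ × ℝ) :
    ENNReal.ofReal (besovKernel α p u v) * ‖F u - F v‖ₑ ^ p ≤
      2 ^ (p - 1) *
        (ENNReal.ofReal (besovKernel α p u v / bridgeArea u v) * bridgeEnergy α p F u v +
          ENNReal.ofReal (besovKernel α p v u / bridgeArea v u) * bridgeEnergy α p F v u) := by
  rcases eq_or_ne u v with rfl | huv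
  · simp [show 0 < p by linarith]
  have hA : 0 < bridgeArea u v := by
    have hd := quasiDist_pos huv
    unfold bridgeArea pairScale
    positivity
  calc
    _ = ENNReal.ofReal (besovKernel α p u v / bridgeArea u v) *
        (ENNReal.ofReal (bridgeArea u v) * ‖F u - F v‖ₑ ^ p) := by
      rw [← mul_assoc, ← ENNReal.ofReal_mul' hA.le, div_mul_cancel₀ _ hA.ne']
    _ ≤ ENNReal.ofReal (besovKernel α p u v / bridgeArea u v) *
        (2 ^ (p - 1) * (bridgeEnergy α p F u v + bridgeEnergy α p F v u)) := by
      grw [ofReal_bridgeArea_mul_le hα hp hF huv]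
    _ = _ := by
      rw [besovKernel_comm α p v, bridgeArea_comm v]
      ring

theorem exists_lintegral_besovKernel_mul_le_chainEnergy (hα : 1 ≤ α) (hp : 1 ≤ p) :
    ∃ K : ℝ≥0∞, K ≠ ∞ ∧ ∀ F : ℝ × ℝ → ℝ, Measurable F →
      ∫⁻ u, ∫⁻ v, ENNReal.ofReal (besovKernel α p u v) * ‖F u - F v‖ₑ ^ p
        ∂planeMeasure α ∂planeMeasure α ≤ K * chainEnergy α p (24 * α) F := by
  obtain ⟨K, hK⟩ := exists_lintegral_lintegral_besovKernel_mul_bridgeEnergy_le hα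
    (zero_le_one.trans hp)
  refine ⟨2 ^ (p - 1) * (2 * ENNReal.ofReal K), by finiteness, fun F hF ↦ ?_⟩
  set N : ℝ × ℝ → ℝ × ℝ → ℝ≥0∞ := fun u v ↦
    ENNReal.ofReal (besovKernel α p u v / bridgeArea u v) * bridgeEnergy α p F u v
  have hN : Measurable fun q : (ℝ × ℝ) × (ℝ × ℝ) ↦ N q.1 q.2 := by fun_prop
  have htwo : (2 : ℝ≥0∞) ^ (p - 1) ≠ ∞ := by finiteness
  calc
    _ ≤ ∫⁻ u, ∫⁻ v, 2 ^ (p - 1) * (N u v + N v u) ∂planeMeasure α ∂planeMeasure α := by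
      exact lintegral_mono fun u ↦ lintegral_mono fun v ↦ ofReal_besovKernel_mul_le hα hp hF u v
    _ = 2 ^ (p - 1) * ((∫⁻ u, ∫⁻ v, N u v ∂planeMeasure α ∂planeMeasure α) +
        ∫⁻ u, ∫⁻ v, N v u ∂planeMeasure α ∂planeMeasure α) := by
      simp_rw [lintegral_const_mul' _ _ htwo]
      rw [← lintegral_add_left hN.lintegral_prod_right']
      congr 2 with u
      exact lintegral_add_left (hN.comp measurable_prodMk_left) _
    _ = 2 ^ (p - 1) * (2 * ∫⁻ u, ∫⁻ v, N u v ∂planeMeasure α ∂planeMeasure α) := by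
      rw [lintegral_lintegral_swap hN.aemeasurable, two_mul]
    _ ≤ _ := by grw [hK F hF]; ring_nf; rfl

end Averaging

lemma exists_rpow_div_le_besovKernel_mul {α p : ℝ} (hα : 1 ≤ α) (hp : 1 < p) :
    ∃ K : ℝ≥0∞, K ≠ ∞ ∧ ∀ (F : ℝ × ℝ → ℝ) (u v : ℝ × ℝ),
      ENNReal.ofReal (|F u - F v| ^ p) /
          (ENNReal.ofReal (ccDist α (u.1, u.2, 0) (v.1, v.2, 0) ^ (p - 1)) *
            planeMeasure α {v' | ccDist α (u.1, u.2, 0) (v'.1, v'.2, 0) <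
              ccDist α (u.1, u.2, 0) (v.1, v.2, 0)}) ≤
        K * (ENNReal.ofReal (besovKernel α p u v) * ‖F u - F v‖ₑ ^ p) := by
  obtain ⟨c, hc, hball⟩ := exists_mul_rpow_le_rpow_mul_planeMeasure_ccBall hα hp
  refine ⟨ENNReal.ofReal c⁻¹, ENNReal.ofReal_ne_top, fun F u v ↦ ?_⟩
  have hp₀ : 0 < p := by linarith
  rcases eq_or_ne u v with rfl | huv
  · simp [hp₀.ne']
  have hd := quasiDist_pos huv
  have hm : 0 < pairScale u v := by unfold pairScale; positivity
  grw [← hball u v huv]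
  rw [Real.enorm_eq_ofReal_abs, ENNReal.ofReal_rpow_of_nonneg (abs_nonneg _) hp₀.le,
    ENNReal.div_eq_inv_mul, ← ENNReal.ofReal_inv_of_pos (by positivity), mul_inv,
    ENNReal.ofReal_mul (by positivity), mul_assoc, besovKernel]

lemma exists_lintegral_rpow_div_le_chainEnergy {α p : ℝ} (hα : 1 ≤ α) (hp : 1 < p) :
    ∃ K : ℝ≥0∞, K ≠ ∞ ∧ ∀ F : ℝ × ℝ → ℝ, Measurable F →
      ∫⁻ w : (ℝ × ℝ) × (ℝ × ℝ), ENNReal.ofReal (|F w.1 - F w.2| ^ p) /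
          (ENNReal.ofReal (ccDist α (w.1.1, w.1.2, 0) (w.2.1, w.2.2, 0) ^ (p - 1)) *
            planeMeasure α {v | ccDist α (w.1.1, w.1.2, 0) (v.1, v.2, 0) <
              ccDist α (w.1.1, w.1.2, 0) (w.2.1, w.2.2, 0)})
          ∂(planeMeasure α).prod (planeMeasure α) ≤ K * chainEnergy α p (24 * α) F := by
  obtain ⟨K₁, hK₁, besov_le⟩ := exists_rpow_div_le_besovKernel_mul hα hp
  obtain ⟨K₂, hK₂, average_le⟩ := exists_lintegral_besovKernel_mul_le_chainEnergy hα hp.le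
  refine ⟨K₁ * K₂, by finiteness, fun F hF ↦ ?_⟩
  calc
    _ ≤ ∫⁻ w : (ℝ × ℝ) × (ℝ × ℝ),
          K₁ * (ENNReal.ofReal (besovKernel α p w.1 w.2) * ‖F w.1 - F w.2‖ₑ ^ p)
          ∂(planeMeasure α).prod (planeMeasure α) := lintegral_mono fun w ↦ besov_le F w.1 w.2
    _ ≤ K₁ * (K₂ * chainEnergy α p (24 * α) F) := by
      rw [lintegral_const_mul' _ _ hK₁, lintegral_prod _ (by fun_prop)]
      grw [average_le F hF]
    _ = _ := by rw [mul_assoc]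

/-- Trace theorem for Martinet-type vector fields. -/
theorem trace_theorem (α p : ℝ) (hα : 1 ≤ α) (hp : 1 < p) (s : ℝ) (hs : s = 1 - 1 / p) :
    ∃ C : ℝ, 0 < C ∧ ∀ f : ℝ × ℝ × ℝ → ℝ, ContDiffOn ℝ 1 f upperHalf →
      (∫⁻ w : (ℝ × ℝ) × (ℝ × ℝ),
          ENNReal.ofReal (|f (w.1.1, w.1.2, 0) - f (w.2.1, w.2.2, 0)| ^ p) /
            (ENNReal.ofReal ((ccDist α (w.1.1, w.1.2, 0) (w.2.1, w.2.2, 0)) ^ (p * s)) *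
              planeMeasure α {v : ℝ × ℝ |
                ccDist α (w.1.1, w.1.2, 0) (v.1, v.2, 0) <
                  ccDist α (w.1.1, w.1.2, 0) (w.2.1, w.2.2, 0)})
          ∂((planeMeasure α).prod (planeMeasure α))) ≤
        ENNReal.ofReal C *
          ∫⁻ q in upperHalf, ENNReal.ofReal ((XGradNorm α f q) ^ p) := by
  have hps : p * s = p - 1 := by rw [hs]; field_simp
  obtain ⟨K₁, hK₁, besov_le⟩ := exists_lintegral_rpow_div_le_chainEnergy hα hp
  obtain ⟨K₂, hK₂, energy_le⟩ :=
    exists_chainEnergy_le (α := α) (p := p) (C := 24 * α) (by linarith) hp (by linarith)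
  have hK : K₁ * K₂ ≠ ∞ := by finiteness
  refine ⟨(K₁ * K₂).toReal + 1, by positivity, fun f hf ↦ ?_⟩
  have hF : Measurable fun u : ℝ × ℝ ↦ f (u.1, u.2, 0) :=
    (hf.continuousOn.comp_continuous (by fun_prop) fun _ ↦ le_refl (0 : ℝ)).measurable
  have hg : Measurable (enormXGrad α f) := measurable_enormXGrad (by linarith) hf
  rw [hps, ← lintegral_enormXGrad_rpow α f (by linarith)]
  calc
    _ ≤ K₁ * chainEnergy α p (24 * α) fun u ↦ f (u.1, u.2, 0) := besov_le _ hF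
    _ ≤ K₁ * (K₂ * ∫⁻ q, enormXGrad α f q ^ p) := by
      grw [energy_le _ hg _ (isChainUpperGradient_enormXGrad hα hf)]
    _ = K₁ * K₂ * ∫⁻ q, enormXGrad α f q ^ p := (mul_assoc _ _ _).symm
    _ ≤ _ := by
      gcongr
      exact (ENNReal.le_ofReal_iff_toReal_le hK (by positivity)).2 (by linarith)
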